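/- arXiv:0902.3953 — 3 statements merged into one kernel-verified Lean document; each statement's English description precedes it below -/
import Mathlib

section
/- Let q ≥ 3 be an integer, a_0 ∈ ℤ, and let (a_i)_{i≥1} be an infinite q-regular sequence of nonzero integers. Then for the convergents of the λ_q-continued fraction [a_0; a_1, a_2, …] one has q_n ≠ 0 for all n ≥ 0 and the sequence p_n/q_n converges in ℝ; that is, every regular λ_q-CF converges. -/
open Filter Topology

/-- `λ_q = 2 cos (π/q)`. -/
noncomputable def lamq (q : ℕ) : ℝ := 2 * Real.cos (Real.pi / q)

/-- `h_q = (q-2)/2` for even `q` and `(q-3)/2` for odd `q`. -/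
def hQ (q : ℕ) : ℕ := if Even q then (q - 2) / 2 else (q - 3) / 2

/-- Forbidden blocks for the nearest `λ_q`-multiple continued fractions.
For `ε ∈ {1,-1}`: the block `(ε)^{h_q+1}`; for even `q` the blocks `((ε)^{h_q}, ε·m)`, `m ≥ 1`;
for odd `q` (including `q = 3`, where `h_q = 0`) the blocks `((ε)^{h_q}, ε·2, (ε)^{h_q}, ε·m)`,
`m ≥ 1`. -/
def IsForbidden (q : ℕ) (L : List ℤ) : Prop :=
  ∃ ε : ℤ, (ε = 1 ∨ ε = -1) ∧
    (L = List.replicate (hQ q + 1) ε ∨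
      (if Even q then
        ∃ m : ℤ, 1 ≤ m ∧ L = List.replicate (hQ q) ε ++ [ε * m]
      else
        ∃ m : ℤ, 1 ≤ m ∧
          L = List.replicate (hQ q) ε ++ ε * 2 :: (List.replicate (hQ q) ε ++ [ε * m])))

/-- An infinite sequence is `q`-regular if no finite subblock is forbidden. -/
def RegularSeq (q : ℕ) (a : ℕ → ℤ) : Prop :=
  ∀ (l len : ℕ), ¬ IsForbidden q (List.ofFn fun j : Fin len => a (l + (j : ℕ)))

/-- An infinite sequence is dual `q`-regular if no reversed finite subblock is forbidden. -/
def DualRegularSeq (q : ℕ) (a : ℕ → ℤ) : Prop :=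
  ∀ (l len : ℕ), ¬ IsForbidden q (List.ofFn fun j : Fin len => a (l + (j : ℕ))).reverse

/-- A finite sequence is `q`-regular if no contiguous subblock is forbidden. -/
def RegularList (q : ℕ) (L : List ℤ) : Prop :=
  ∀ B : List ℤ, B <:+: L → ¬ IsForbidden q B

/-- Numerators of the convergents: `p₀ = a₀λ`, `p₁ = a₁λ·p₀ - 1`,
`pₙ = aₙλ·pₙ₋₁ - pₙ₋₂` (so that `p₋₁ = 1`, `p₋₂ = 0`).  Here `A n` is the digit `aₙ`. -/
noncomputable def cfP (lam : ℝ) (A : ℕ → ℤ) : ℕ → ℝ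
  | 0 => (A 0 : ℝ) * lam
  | 1 => (A 1 : ℝ) * lam * ((A 0 : ℝ) * lam) - 1
  | (n + 2) => (A (n + 2) : ℝ) * lam * cfP lam A (n + 1) - cfP lam A n

/-- Denominators of the convergents: `q₀ = 1`, `q₁ = a₁λ`,
`qₙ = aₙλ·qₙ₋₁ - qₙ₋₂` (so that `q₋₁ = 0`, `q₋₂ = -1`). -/
noncomputable def cfQ (lam : ℝ) (A : ℕ → ℤ) : ℕ → ℝ
  | 0 => 1
  | 1 => (A 1 : ℝ) * lam
  | (n + 2) => (A (n + 2) : ℝ) * lam * cfQ lam A (n + 1) - cfQ lam A n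

/-- The λ-continued fraction with digit sequence `A` converges to `x`. -/
def CFConvergesTo (lam : ℝ) (A : ℕ → ℤ) (x : ℝ) : Prop :=
  (∀ n, cfQ lam A n ≠ 0) ∧
    Filter.Tendsto (fun n => cfP lam A n / cfQ lam A n) Filter.atTop (nhds x)

/-- The value `p_L/q_L` of the finite continued fraction `[a₀; a₁, …, a_L]`. -/
noncomputable def cfValList (lam : ℝ) (a0 : ℤ) (L : List ℤ) : ℝ :=
  cfP lam (fun i => (a0 :: L).getD i 0) L.length /
    cfQ lam (fun i => (a0 :: L).getD i 0) L.length

/-- The last denominator `q_L` of the finite continued fraction `[a₀; a₁, …, a_L]`. -/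
noncomputable def cfDenList (lam : ℝ) (a0 : ℤ) (L : List ℤ) : ℝ :=
  cfQ lam (fun i => (a0 :: L).getD i 0) L.length

/-- The modified floor: `⌊t⌋* = ⌈t⌉ - 1` for `t > 0` and `⌊t⌋* = ⌊t⌋` for `t ≤ 0`. -/
noncomputable def floorstar (t : ℝ) : ℤ := if 0 < t then ⌈t⌉ - 1 else ⌊t⌋

/-- The nearest `λ`-multiple: `⟨y⟩ = ⌊y/λ + 1/2⌋*`. -/
noncomputable def nearestLam (lam : ℝ) (x : ℝ) : ℤ := floorstar (x / lam + 1 / 2)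

/-- The interval map `f_q` on `I_q = [-λ/2, λ/2]`. -/
noncomputable def fq (lam : ℝ) (x : ℝ) : ℝ :=
  if x = 0 then 0 else -1 / x - (nearestLam lam (-1 / x) : ℝ) * lam

/-- `R_q`: equal to `1` for even `q`, and the positive root of `R² + (2-λ_q)R = 1` for odd `q`. -/
noncomputable def Rq (q : ℕ) : ℝ :=
  if Even q then 1 else (lamq q - 2 + Real.sqrt ((2 - lamq q) ^ 2 + 4)) / 2

/-- `r_q = R_q - λ_q`. -/
noncomputable def rq (q : ℕ) : ℝ := Rq q - lamq q

/-- The map `⟨·⟩*` used by the dual algorithm. -/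
noncomputable def nearestDual (lam R y : ℝ) : ℤ :=
  if 0 ≤ y then floorstar (y / lam + 1 - R / lam) else floorstar (y / lam + R / lam)

/-- The dual interval map `f_q^*` on `I_{R_q} = [-R_q, R_q]`. -/
noncomputable def fqstar (lam R : ℝ) (x : ℝ) : ℝ :=
  if x = 0 then 0 else -1 / x - (nearestDual lam R (-1 / x) : ℝ) * lam

/-- The matrix `S = [[0,-1],[1,0]]` as an element of `SL(2,ℝ)`. -/
noncomputable def matS : Matrix.SpecialLinearGroup (Fin 2) ℝ :=
  ⟨!![0, -1; 1, 0], by norm_num [Matrix.det_fin_two_of]⟩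

/-- The matrix `T = [[1,λ],[0,1]]` as an element of `SL(2,ℝ)`. -/
noncomputable def matT (lam : ℝ) : Matrix.SpecialLinearGroup (Fin 2) ℝ :=
  ⟨!![1, lam; 0, 1], by norm_num [Matrix.det_fin_two_of]⟩

/-- The Hecke triangle group `G_q`, the subgroup of `SL(2,ℝ)` generated by `S` and `T_q`. -/
noncomputable def Hecke (q : ℕ) : Subgroup (Matrix.SpecialLinearGroup (Fin 2) ℝ) :=
  Subgroup.closure {matS, matT (lamq q)}

/-- The Möbius action of `g` on `x ∈ ℝ`. -/
noncomputable def moeb (g : Matrix.SpecialLinearGroup (Fin 2) ℝ) (x : ℝ) : ℝ :=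
  (g.val 0 0 * x + g.val 0 1) / (g.val 1 0 * x + g.val 1 1)

/-- `x` and `y` are `G_q`-equivalent. -/
def GqEquiv (q : ℕ) (x y : ℝ) : Prop :=
  ∃ g ∈ Hecke q, (g.val 1 0 * x + g.val 1 1 ≠ 0) ∧ moeb g x = y

/-- Two sequences have a common tail. -/
def CommonTail (a b : ℕ → ℤ) : Prop := ∃ m n : ℕ, ∀ k : ℕ, a (m + k) = b (n + k)

/-- The period block of `ρ_q`: `(3)` for `q = 3`, `((1)^{h_q-1}, 2)` for even `q`
and `((1)^{h_q}, 2, (1)^{h_q-1}, 2)` for odd `q ≥ 5`. -/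
def rhoBlock (q : ℕ) : List ℤ :=
  if q = 3 then [3]
  else if Even q then List.replicate (hQ q - 1) 1 ++ [2]
  else List.replicate (hQ q) 1 ++ 2 :: (List.replicate (hQ q - 1) 1 ++ [2])

/-- The periodic sequence `ρ_q`. -/
def rho (q : ℕ) (i : ℕ) : ℤ := (rhoBlock q).getD (i % (rhoBlock q).length) 0

/-- `x` has the infinite regular `λ_q`-CF with digit sequence `A` (with `A 0 = a₀`). -/
def HasRegCF (q : ℕ) (x : ℝ) (A : ℕ → ℤ) : Prop :=
  (∀ i, A (i + 1) ≠ 0) ∧ RegularSeq q (fun i => A (i + 1)) ∧ CFConvergesTo (lamq q) A x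

/-- `x` has the infinite dual regular `λ_q`-CF with digit sequence `A` (with `A 0 = a₀`). -/
def HasDualRegCF (q : ℕ) (x : ℝ) (A : ℕ → ℤ) : Prop :=
  (∀ i, A (i + 1) ≠ 0) ∧ DualRegularSeq q (fun i => A (i + 1)) ∧ CFConvergesTo (lamq q) A x

/-- The digits of `x` produced by the algorithm for `f_q`: `a_{i+1} = ⟨-1 / f_q^i(x)⟩`. -/
noncomputable def digitSeq (lam : ℝ) (x : ℝ) : ℕ → ℤ :=
  fun i => nearestLam lam (-1 / (fq lam)^[i] x)

/-- The digits of `x` produced by the algorithm for `f_q^*`: `b_{i+1} = ⟨-1 / (f_q^*)^i(x)⟩*`. -/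
noncomputable def digitSeqStar (lam R : ℝ) (x : ℝ) : ℕ → ℤ :=
  fun i => nearestDual lam R (-1 / (fqstar lam R)^[i] x)

/-- The reversed ratio `q_{n-1}/q_n`. -/
noncomputable def rr (lam : ℝ) (A : ℕ → ℤ) : ℕ → ℝ
  | 0 => 0
  | (n + 1) => 1 / ((A (n + 1) : ℝ) * lam - rr lam A n)

/-- `A (l+1), …, A (l+j)` are all equal to `e`. -/
def Run (A : ℕ → ℤ) (e : ℤ) (l j : ℕ) : Prop := ∀ i < j, A (l + 1 + i) = e

lemma Run.zero (A : ℕ → ℤ) (e : ℤ) (l : ℕ) : Run A e l 0 := fun i hi => by omega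

lemma Run.succ {A : ℕ → ℤ} {e : ℤ} {l j : ℕ} (h : Run A e l j) (h2 : A (l + 1 + j) = e) :
    Run A e l (j + 1) := by
  intro i hi
  rcases Nat.lt_succ_iff_lt_or_eq.mp hi with h3 | h3
  · exact h i h3
  · rw [h3]; exact h2

lemma cfQ_rr (lam : ℝ) (A : ℕ → ℤ)
    (hd : ∀ n, (A (n + 1) : ℝ) * lam - rr lam A n ≠ 0) (n : ℕ) :
    cfQ lam A (n + 1) = cfQ lam A n * ((A (n + 1) : ℝ) * lam - rr lam A n) := by
  induction n with
  | zero => simp [cfQ, rr]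
  | succ n ih =>
    have h1 := hd n
    rw [cfQ, rr]
    have : cfQ lam A n = cfQ lam A (n+1) * (1 / ((A (n + 1) : ℝ) * lam - rr lam A n)) := by
      rw [ih]; field_simp
    linear_combination (-1) * this

lemma cf_det (lam : ℝ) (A : ℕ → ℤ) (n : ℕ) :
    cfP lam A n * cfQ lam A (n + 1) - cfP lam A (n + 1) * cfQ lam A n = 1 := by
  induction n with
  | zero => simp [cfQ, cfP]; ring
  | succ n ih =>
    rw [cfQ, cfP]; linear_combination ih

lemma conv_of_bound (lam : ℝ) (A : ℕ → ℤ) (ρ : ℝ) (hρ : ρ < 1)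
    (hd : ∀ n, (A (n + 1) : ℝ) * lam - rr lam A n ≠ 0)
    (hb : ∀ n, |rr lam A (n + 1) * rr lam A (n + 2)| ≤ ρ) :
    (∀ n, cfQ lam A n ≠ 0) ∧
      ∃ x : ℝ, Filter.Tendsto (fun n => cfP lam A n / cfQ lam A n)
        Filter.atTop (nhds x) := by
  have hq : ∀ n, cfQ lam A n ≠ 0 := by
    intro n
    induction n with
    | zero => simp [cfQ]
    | succ n ih => rw [cfQ_rr lam A hd]; exact mul_ne_zero ih (hd n)
  refine ⟨hq, ?_⟩
  have hρ0 : 0 ≤ ρ := (abs_nonneg _).trans (hb 0)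
  have hdist : ∀ n, cfP lam A n / cfQ lam A n - cfP lam A (n+1) / cfQ lam A (n+1)
      = 1 / (cfQ lam A n * cfQ lam A (n+1)) := by
    intro n
    have := cf_det lam A n
    have h1 := hq n
    have h2 := hq (n+1)
    field_simp
    linear_combination this
  have hstep : ∀ n, 1 / (cfQ lam A (n+1) * cfQ lam A (n+2))
      = 1 / (cfQ lam A n * cfQ lam A (n+1)) * (rr lam A (n + 1) * rr lam A (n + 2)) := by
    intro n
    have e1 := cfQ_rr lam A hd n
    have e2 := cfQ_rr lam A hd (n+1)
    have h1 := hq n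
    have h2 := hq (n+1)
    have d1 := hd n
    have d2 := hd (n+1)
    rw [show rr lam A (n+2) = 1 / ((A (n + 2) : ℝ) * lam - rr lam A (n+1)) from rfl]
    rw [e2]
    rw [show n + 1 + 1 = n + 2 from rfl] at *
    have e3 : rr lam A (n+1) = cfQ lam A n / cfQ lam A (n+1) := by
      rw [e1, rr]; field_simp
    generalize ((A (n + 2) : ℝ) * lam - rr lam A (n+1)) = d at *
    rw [e3]
    field_simp
  have hgeo : ∀ n, |1 / (cfQ lam A n * cfQ lam A (n+1))|
      ≤ |1 / (cfQ lam A 0 * cfQ lam A 1)| * ρ ^ n := by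
    intro n
    induction n with
    | zero => simp
    | succ n ih =>
      rw [hstep, abs_mul, pow_succ, ← mul_assoc]
      exact mul_le_mul ih (hb n) (abs_nonneg _) (by positivity)
  have hc : CauchySeq (fun n => cfP lam A n / cfQ lam A n) := by
    refine cauchySeq_of_le_geometric ρ |1 / (cfQ lam A 0 * cfQ lam A 1)| hρ (fun n => ?_)
    rw [Real.dist_eq, hdist]; exact hgeo n
  exact cauchySeq_tendsto_of_complete hc

/-- Orbit of `x ↦ 1/(λ-x)`. -/
lemma orbit (θ x : ℝ) (H : ℕ) (hθ : 0 < θ) (hH : ((H:ℝ) + 1) * θ ≤ Real.pi / 2)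
    (hx : 0 < x) (hx1 : x < 1) :
    ∃ b : ℕ → ℝ, b 0 = x ∧ (∀ j ≤ H, 0 < b j) ∧
      (∀ j < H, b (j + 1) * (2 * Real.cos θ - b j) = 1) ∧
      (∀ j ≤ H, b j ≤ b H) ∧
      0 < Real.sin (((H:ℝ) + 1) * θ) - Real.sin ((H:ℝ) * θ) * x ∧
      b H * (Real.sin (((H:ℝ) + 1) * θ) - Real.sin ((H:ℝ) * θ) * x)
        = Real.sin ((H:ℝ) * θ) - Real.sin (((H:ℝ) - 1) * θ) * x := by
  have hpi := Real.pi_pos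
  have hle : ∀ j : ℕ, j ≤ H → ((j:ℝ) + 1) * θ ≤ Real.pi / 2 := by
    intro j hj
    have : (j:ℝ) ≤ H := by exact_mod_cast hj
    nlinarith
  have hD : ∀ j : ℕ, j ≤ H →
      0 < Real.sin (((j:ℝ) + 1) * θ) - Real.sin ((j:ℝ) * θ) * x := by
    intro j hj
    have h1 := hle j hj
    have hj0 : (0:ℝ) ≤ j * θ := by positivity
    have h2 : 0 ≤ Real.sin ((j:ℝ) * θ) :=
      Real.sin_nonneg_of_nonneg_of_le_pi hj0 (by nlinarith)
    have h3 : Real.sin ((j:ℝ) * θ) < Real.sin (((j:ℝ) + 1) * θ) :=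
      Real.sin_lt_sin_of_lt_of_le_pi_div_two (by linarith) h1 (by nlinarith)
    nlinarith
  have hs : Real.sin θ > 0 := Real.sin_pos_of_pos_of_lt_pi hθ (by
    have := hle 0 (Nat.zero_le _); simp at this; linarith)
  have hrec : ∀ t : ℝ, Real.sin ((t + 1) * θ) + Real.sin ((t - 1) * θ)
      = 2 * Real.cos θ * Real.sin (t * θ) := by
    intro t
    rw [add_mul, sub_mul, one_mul, Real.sin_add, Real.sin_sub]; ring
  let b : ℕ → ℝ := fun j => (Real.sin ((j:ℝ) * θ) - Real.sin (((j:ℝ) - 1) * θ) * x) /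
      (Real.sin (((j:ℝ) + 1) * θ) - Real.sin ((j:ℝ) * θ) * x)
  have hpos : ∀ j ≤ H, 0 < b j := by
    intro j hj
    refine div_pos ?_ (hD j hj)
    rcases j with _ | j
    · simp; positivity
    · have := hD j (by omega)
      push_cast
      rw [show (j:ℝ) + 1 - 1 = j by ring]; exact this
  have hb : ∀ j < H, b (j + 1) * (2 * Real.cos θ - b j) = 1 := by
    intro j hj
    have h1 := hD j hj.le
    have h2 := hD (j+1) hj
    have r1 := hrec j
    have r2 := hrec (j+1)
    simp only [b]
    push_cast at h2 ⊢
    rw [show (j:ℝ) + 1 - 1 = j by ring] at *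
    generalize Real.sin (((j:ℝ) + 1 + 1) * θ) = s2 at *
    generalize Real.sin (((j:ℝ) + 1) * θ) = s1 at *
    generalize Real.sin (((j:ℝ)) * θ) = s0 at *
    generalize Real.sin (((j:ℝ) - 1) * θ) = sm at *
    have h1' := h1.ne'
    have h2' := h2.ne'
    field_simp
    have e1 : sm = 2 * Real.cos θ * s0 - s1 := by linarith
    have e2 : s2 = 2 * Real.cos θ * s1 - s0 := by linarith
    rw [e1, e2]; ring
  have hmono : ∀ j < H, b j ≤ b (j+1) := by
    intro j hj
    have h1 := hb j hj
    have h2 := hpos j hj.le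
    have h3 := hpos (j+1) hj
    have h4 : 0 < 2 * Real.cos θ - b j := by
      by_contra h; nlinarith
    have h5 := Real.cos_le_one θ
    by_contra h
    push Not at h
    have : b j * (2 * Real.cos θ - b j) > 1 := by nlinarith
    nlinarith [sq_nonneg (b j - 1)]
  have hall : ∀ k j, j + k = H → b j ≤ b H := by
    intro k
    induction k with
    | zero => intro j hj; simp at hj; rw [hj]
    | succ k ih => intro j hj; exact (hmono j (by omega)).trans (ih (j+1) (by omega))
  refine ⟨b, ?_, hpos, hb, fun j hj => hall (H - j) j (by omega), hD H le_rfl, ?_⟩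
  · simp [b]; field_simp
  · exact div_mul_cancel₀ _ (hD H le_rfl).ne'

lemma lam_bounds (q : ℕ) (hq : 3 ≤ q) : 1 ≤ lamq q ∧ lamq q < 2 ∧ (4 ≤ q → 1 < lamq q) := by
  have hpi := Real.pi_pos
  have hq' : (3:ℝ) ≤ q := by exact_mod_cast hq
  have h3 : Real.pi / q ≤ Real.pi / 3 := by gcongr
  have h0 : 0 < Real.pi / q := by positivity
  have hc := Real.cos_pi_div_three
  refine ⟨?_, ?_, ?_⟩
  · have := Real.cos_le_cos_of_nonneg_of_le_pi h0.le (by linarith) h3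
    unfold lamq; linarith
  · have := Real.cos_lt_cos_of_nonneg_of_le_pi (le_refl 0) (by linarith) h0
    rw [Real.cos_zero] at this
    unfold lamq; linarith
  · intro h4
    have hq'' : (3:ℝ) < q := by exact_mod_cast h4
    have h3' : Real.pi / q < Real.pi / 3 := by gcongr
    have := Real.cos_lt_cos_of_nonneg_of_le_pi h0.le (by linarith) h3'
    unfold lamq; linarith

lemma no_ones (q : ℕ) (A : ℕ → ℤ) (hreg : RegularSeq q (fun i => A (i + 1)))
    (e : ℤ) (he : e = 1 ∨ e = -1) (l : ℕ) (h : Run A e l (hQ q + 1)) : False := by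
  refine hreg l (hQ q + 1) ⟨e, he, Or.inl ?_⟩
  apply List.ext_getElem
  · simp
  · intro i h1 h2
    simp at h2
    simp only [List.getElem_ofFn, List.getElem_replicate]
    rw [show l + i + 1 = l + 1 + i by ring]
    exact h i (by omega)

lemma no_even (q : ℕ) (hE : Even q) (A : ℕ → ℤ) (hreg : RegularSeq q (fun i => A (i + 1)))
    (e : ℤ) (he : e = 1 ∨ e = -1) (l : ℕ) (h : Run A e l (hQ q)) (m : ℤ) (hm : 1 ≤ m)
    (h2 : A (l + 1 + hQ q) = e * m) : False := by
  refine hreg l (hQ q + 1) ⟨e, he, Or.inr ?_⟩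
  rw [if_pos hE]
  refine ⟨m, hm, ?_⟩
  apply List.ext_getElem
  · simp
  · intro i h1 h3
    simp at h1 h3
    simp only [List.getElem_ofFn, List.getElem_append, List.length_replicate,
      List.getElem_replicate, List.getElem_singleton]
    rw [show l + i + 1 = l + 1 + i by ring]
    split_ifs with h4
    · exact h i h4
    · rw [show i = hQ q by omega]; exact h2

lemma no_odd (q : ℕ) (hE : ¬ Even q) (A : ℕ → ℤ) (hreg : RegularSeq q (fun i => A (i + 1)))
    (e : ℤ) (he : e = 1 ∨ e = -1) (l : ℕ) (h : Run A e l (hQ q))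
    (hh : A (l + 1 + hQ q) = e * 2) (h' : Run A e (l + hQ q + 1) (hQ q)) (m : ℤ) (hm : 1 ≤ m)
    (h2 : A (l + hQ q + 1 + 1 + hQ q) = e * m) : False := by
  refine hreg l (hQ q + (1 + (hQ q + 1))) ⟨e, he, Or.inr ?_⟩
  rw [if_neg hE]
  refine ⟨m, hm, ?_⟩
  apply List.ext_getElem
  · simp; omega
  · intro i h1 h3
    simp at h1
    simp only [List.getElem_ofFn, List.getElem_append, List.length_replicate,
      List.getElem_replicate, List.getElem_cons]
    rw [show l + i + 1 = l + 1 + i by ring]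
    split_ifs with h4 h5 h6 h7
    · exact h i h4
    · rw [show i = hQ q by omega]; exact hh
    · have := h' _ h6
      rw [← this]; congr 1; omega
    · rw [← h2]; congr 1; omega
    · omega

/-- Sign decomposition. -/
lemma sgn (a : ℤ) (ha : a ≠ 0) : ∃ e m : ℤ, (e = 1 ∨ e = -1) ∧ 1 ≤ m ∧ a = e * m := by
  rcases lt_or_gt_of_ne ha with h | h
  · exact ⟨-1, -a, Or.inr rfl, by omega, by ring⟩
  · exact ⟨1, a, Or.inl rfl, by omega, by ring⟩

/-- Multiply a step by the sign. -/
lemma rr_step (lam : ℝ) (A : ℕ → ℤ) (n : ℕ) (e m : ℤ) (he : e = 1 ∨ e = -1)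
    (hA : A (n + 1) = e * m) :
    (e : ℝ) * rr lam A (n + 1) = 1 / ((m : ℝ) * lam - e * rr lam A n) ∧
    (A (n + 1) : ℝ) * lam - rr lam A n = e * ((m : ℝ) * lam - e * rr lam A n) := by
  rw [rr, hA]
  rcases he with rfl | rfl
  · simp
  · constructor
    · push_cast
      rw [show (-1 * (m:ℝ)) * lam - rr lam A n = -((m:ℝ) * lam - (-1) * rr lam A n) by ring,
        one_div_neg_eq_neg_one_div]
      ring
    · push_cast; ring

lemma abs_of_signs {r B : ℝ} (h : ∀ e : ℤ, e = 1 ∨ e = -1 → (e:ℝ) * r ≤ B) : |r| ≤ B := by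
  have h1 := h 1 (Or.inl rfl)
  have h2 := h (-1) (Or.inr rfl)
  push_cast at h1 h2
  rw [abs_le]; constructor <;> linarith

lemma sign_flip {e e' : ℤ} (he : e = 1 ∨ e = -1) (he' : e' = 1 ∨ e' = -1) (hne : e' ≠ e) :
    e' = - e := by
  rcases he with rfl | rfl <;> rcases he' with rfl | rfl <;> simp_all

theorem even_case (q : ℕ) (hq : 3 ≤ q) (hE : Even q) (A : ℕ → ℤ)
    (hnz : ∀ i, A (i + 1) ≠ 0) (hreg : RegularSeq q (fun i => A (i + 1))) :
    (∀ n, cfQ (lamq q) A n ≠ 0) ∧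
      ∃ x : ℝ, Filter.Tendsto (fun n => cfP (lamq q) A n / cfQ (lamq q) A n)
        Filter.atTop (nhds x) := by
  obtain ⟨hl1, hl2, hl3⟩ := lam_bounds q hq
  have hq4 : 4 ≤ q := by
    rcases hE with ⟨k, hk⟩; omega
  have hl3 := hl3 hq4
  obtain ⟨h, hh⟩ : ∃ h, h = hQ q := ⟨_, rfl⟩
  have hqh : q = 2 * h + 2 := by
    rw [hh, hQ, if_pos hE]; rcases hE with ⟨k, hk⟩; omega
  have hpi := Real.pi_pos
  have hθ : 0 < Real.pi / q := by positivity
  have hang : ((h:ℝ) + 1) * (Real.pi / q) = Real.pi / 2 := by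
    rw [hqh]; push_cast; field_simp
  have hx0 : 0 < 1 / (1 + lamq q) := by positivity
  have hx1 : 1 / (1 + lamq q) < 1 := by rw [div_lt_one (by linarith)]; linarith
  obtain ⟨b, hb0, hbpos, hbrec, hbmax, hD, hbH⟩ :=
    orbit (Real.pi / q) (1 / (1 + lamq q)) h hθ hang.le hx0 hx1
  have hs1 : Real.sin ((h:ℝ) * (Real.pi / q)) = lamq q / 2 := by
    rw [show (h:ℝ) * (Real.pi / q) = Real.pi / 2 - Real.pi / q by linarith,
      Real.sin_pi_div_two_sub, lamq]; ring
  have hs2 : Real.sin (((h:ℝ) - 1) * (Real.pi / q)) = lamq q ^ 2 / 2 - 1 := by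
    rw [show ((h:ℝ) - 1) * (Real.pi / q) = Real.pi / 2 - 2 * (Real.pi / q) by linarith,
      Real.sin_pi_div_two_sub, Real.cos_two_mul, lamq]; ring
  rw [hang, Real.sin_pi_div_two, hs1] at hD
  rw [hang, Real.sin_pi_div_two, hs1, hs2] at hbH
  have hbH1 : b h = 1 := by
    have : (1 - lamq q / 2 * (1 / (1 + lamq q))) = 
      lamq q / 2 - (lamq q ^ 2 / 2 - 1) * (1 / (1 + lamq q)) := by
      field_simp; ring
    rw [← this] at hbH
    exact (mul_eq_right₀ hD.ne').mp hbH
  change ∀ j < h, b (j + 1) * (lamq q - b j) = 1 at hbrec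
  generalize lamq q = lam at *
  have hbj : ∀ j < h, b j ≤ lam - 1 := by
    intro j hj
    have h1 := hbrec j hj
    have h2 := hbmax (j+1) hj
    have h3 := hbpos (j+1) hj
    rw [hbH1] at h2
    by_contra hc
    nlinarith
  -- the invariant
  have hinv : ∀ n, ∀ e : ℤ, e = 1 ∨ e = -1 → ∃ l j, n = l + j ∧ j ≤ h ∧ Run A e l j ∧
      (e : ℝ) * rr lam A n ≤ b j := by
    intro n
    induction n with
    | zero =>
      intro e he
      exact ⟨0, 0, rfl, Nat.zero_le _, Run.zero _ _ _, by simp [rr]; exact (hbpos 0 (Nat.zero_le _)).le⟩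
    | succ n ih =>
      obtain ⟨s, m, hs, hm, hA⟩ := sgn _ (hnz n)
      obtain ⟨l, j, hn, hj, hrun, hr⟩ := ih s hs
      obtain ⟨st, -⟩ := rr_step lam A n s m hs hA
      have hm' : (1:ℝ) ≤ m := by exact_mod_cast hm
      have hjlt : j < h := by
        rcases hj.lt_or_eq with h1 | h1
        · exact h1
        · exfalso
          subst h1
          refine no_even q hE A hreg s hs l (hh ▸ hrun) m hm ?_
          rw [← hh, ← hA]; congr 1; omega
      have hbl := hbj j hjlt
      have hden : 1 ≤ (m:ℝ) * lam - s * rr lam A n := by nlinarith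
      intro e he
      by_cases hes : e = s
      · subst hes
        rw [st]
        by_cases hm1 : m = 1
        · refine ⟨l, j + 1, by omega, hjlt, hrun.succ ?_, ?_⟩
          · rw [show l + 1 + j = n + 1 by omega, hA, hm1, mul_one]
          · subst hm1
            rw [div_le_iff₀ (by linarith)]
            have := hbrec j hjlt
            have h3 := hbpos (j+1) hjlt
            push_cast
            nlinarith
        · refine ⟨n + 1, 0, rfl, Nat.zero_le _, Run.zero _ _ _, ?_⟩
          have hm2 : (2:ℝ) ≤ m := by exact_mod_cast (by omega : 2 ≤ m)
          rw [hb0]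
          apply one_div_le_one_div_of_le (by linarith)
          nlinarith
      · refine ⟨n + 1, 0, rfl, Nat.zero_le _, Run.zero _ _ _, ?_⟩
        rw [sign_flip hs he hes]
        have h1 := hbpos 0 (Nat.zero_le _)
        have h2 : 0 ≤ (s:ℝ) * rr lam A (n+1) := by
          rw [st]; apply div_nonneg <;> linarith
        push_cast; linarith
  have hsgn : ∀ n, ∀ s m : ℤ, (s = 1 ∨ s = -1) → 1 ≤ m → A (n+1) = s * m →
      (s:ℝ) * rr lam A n ≤ lam - 1 := by
    intro n s m hs hm hA
    obtain ⟨l, j, hn, hj, hrun, hr⟩ := hinv n s hs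
    have hjlt : j < h := by
      rcases hj.lt_or_eq with h1 | h1
      · exact h1
      · exfalso
        subst h1
        refine no_even q hE A hreg s hs l (hh ▸ hrun) m hm ?_
        rw [← hh, ← hA]; congr 1; omega
    exact hr.trans (hbj j hjlt)
  have habs : ∀ n, |rr lam A n| ≤ 1 := by
    intro n
    refine abs_of_signs fun e he => ?_
    obtain ⟨l, j, hn, hj, hrun, hr⟩ := hinv n e he
    have := hbmax j hj
    linarith
  refine conv_of_bound lam A (max (lam - 1) (1 / lam)) ?_ ?_ ?_
  · apply max_lt
    · linarith
    · rw [div_lt_one] <;> linarith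
  · intro n
    obtain ⟨s, m, hs, hm, hA⟩ := sgn _ (hnz n)
    rw [(rr_step lam A n s m hs hA).2]
    have h1 := hsgn n s m hs hm hA
    have hm' : (1:ℝ) ≤ m := by exact_mod_cast hm
    apply mul_ne_zero
    · rcases hs with rfl | rfl <;> norm_num
    · nlinarith
  · intro n
    obtain ⟨s, m, hs, hm, hA⟩ := sgn _ (hnz (n+1))
    have h1 := hsgn (n+1) s m hs hm hA
    have hm' : (1:ℝ) ≤ m := by exact_mod_cast hm
    have st := (rr_step lam A (n+1) s m hs hA).1
    have hx := habs (n+1)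
    have habse : ∀ y : ℝ, |(s:ℝ) * y| = |y| := by
      intro y; rw [abs_mul]; rcases hs with rfl | rfl <;> simp
    rw [abs_mul, ← habse (rr lam A (n+2)), st, ← habse (rr lam A (n+1))]
    rw [← habse (rr lam A (n+1))] at hx
    generalize (s:ℝ) * rr lam A (n+1) = x at *
    have hml : lam ≤ m * lam := by nlinarith
    have hden : 1 ≤ (m:ℝ) * lam - x := by linarith
    rw [abs_of_pos (show 0 < 1 / ((m:ℝ) * lam - x) by positivity), mul_one_div]
    rcases le_total 0 x with h0 | h0
    · apply le_max_of_le_left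
      rw [abs_of_nonneg h0, div_le_iff₀ (by linarith)]
      nlinarith
    · apply le_max_of_le_right
      apply div_le_div₀ <;> linarith

set_option maxHeartbeats 1000000 in
theorem odd_case (q : ℕ) (hq : 3 ≤ q) (hE : ¬ Even q) (A : ℕ → ℤ)
    (hnz : ∀ i, A (i + 1) ≠ 0) (hreg : RegularSeq q (fun i => A (i + 1))) :
    (∀ n, cfQ (lamq q) A n ≠ 0) ∧
      ∃ x : ℝ, Filter.Tendsto (fun n => cfP (lamq q) A n / cfQ (lamq q) A n)
        Filter.atTop (nhds x) := by
  obtain ⟨hl1, hl2, -⟩ := lam_bounds q hq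
  obtain ⟨h, hh⟩ : ∃ h, h = hQ q := ⟨_, rfl⟩
  have hqh : q = 2 * h + 3 := by
    rw [hh, hQ, if_neg hE]; rcases Nat.not_even_iff_odd.mp hE with ⟨k, hk⟩; omega
  have hpi := Real.pi_pos
  have hθ : 0 < Real.pi / q := by positivity
  have hang2 : ((h:ℝ) + 1) * (Real.pi / q) + ((h:ℝ) + 2) * (Real.pi / q) = Real.pi := by
    rw [hqh]; push_cast; field_simp; ring
  have hang : ((h:ℝ) + 1) * (Real.pi / q) ≤ Real.pi / 2 := by nlinarith
  -- the constant R
  obtain ⟨R, hR0, hR⟩ : ∃ R : ℝ, 0 < R ∧ R ^ 2 + (2 - lamq q) * R = 1 := by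
    have hs := Real.sq_sqrt (show 0 ≤ (2 - lamq q) ^ 2 + 4 by positivity)
    have hlt : 2 - lamq q < Real.sqrt ((2 - lamq q) ^ 2 + 4) :=
      Real.lt_sqrt_of_sq_lt (by linarith)
    refine ⟨(lamq q - 2 + Real.sqrt ((2 - lamq q) ^ 2 + 4)) / 2, by linarith, ?_⟩
    nlinarith
  have hR1 : R < 1 := by
    by_contra hc; push Not at hc; nlinarith
  -- sines
  set σ := Real.sin (((h:ℝ) + 1) * (Real.pi / q)) with hσ
  have hσ0 : 0 < σ := by
    apply Real.sin_pos_of_pos_of_lt_pi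
    · positivity
    · linarith
  have hrec : ∀ t : ℝ, Real.sin ((t + 1) * (Real.pi / q)) + Real.sin ((t - 1) * (Real.pi / q))
      = lamq q * Real.sin (t * (Real.pi / q)) := by
    intro t
    rw [add_mul, sub_mul, one_mul, Real.sin_add, Real.sin_sub, lamq]; ring
  have hs2 : Real.sin (((h:ℝ) + 2) * (Real.pi / q)) = σ := by
    rw [show ((h:ℝ) + 2) * (Real.pi / q) = Real.pi - ((h:ℝ) + 1) * (Real.pi / q) by linarith,
      Real.sin_pi_sub]
  have hs1 : Real.sin ((h:ℝ) * (Real.pi / q)) = (lamq q - 1) * σ := by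
    have := hrec ((h:ℝ) + 1)
    rw [show (h:ℝ) + 1 + 1 = h + 2 by ring, hs2, show (h:ℝ) + 1 - 1 = h by ring] at this
    linarith
  have hs0 : Real.sin (((h:ℝ) - 1) * (Real.pi / q)) = (lamq q ^ 2 - lamq q - 1) * σ := by
    have := hrec h
    rw [hs1] at this
    linear_combination this
  have hend : ∀ x B : ℝ, 0 < σ - Real.sin ((h:ℝ) * (Real.pi / q)) * x →
      B * (σ - Real.sin ((h:ℝ) * (Real.pi / q)) * x)
        = Real.sin ((h:ℝ) * (Real.pi / q)) - Real.sin (((h:ℝ) - 1) * (Real.pi / q)) * x →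
      0 < 1 - (lamq q - 1) * x ∧
      B * (1 - (lamq q - 1) * x) = (lamq q - 1) - (lamq q ^ 2 - lamq q - 1) * x := by
    intro x B h1 h2
    rw [hs1] at h1
    rw [hs1, hs0] at h2
    constructor
    · by_contra hc; nlinarith
    · apply mul_right_cancel₀ hσ0.ne'
      linear_combination h2
  -- first orbit
  have hden1 : 0 < lamq q * R + 1 := by positivity
  have hx0 : 0 < R / (lamq q * R + 1) := by positivity
  have hx1 : R / (lamq q * R + 1) < 1 := by rw [div_lt_one hden1]; nlinarith
  obtain ⟨a, ha0, hapos, harec, hamax, haD, haH⟩ :=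
    orbit (Real.pi / q) (R / (lamq q * R + 1)) h hθ hang hx0 hx1
  obtain ⟨haD', haH'⟩ := hend _ _ haD haH
  have haH1 : a h * (R + 1) = lamq q - 1 + R := by
    have : R / (lamq q * R + 1) * (lamq q * R + 1) = R := div_mul_cancel₀ _ hden1.ne'
    generalize R / (lamq q * R + 1) = x at *
    linear_combination (lamq q * R + 1) * haH' + ((lamq q - 1) * a h - (lamq q ^ 2 - lamq q - 1)) * this
  have haR : a h ≤ R := by
    by_contra hc; push Not at hc; nlinarith
  have ha3 : a h ≤ 2 * lamq q - 1 / R := by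
    have e : 1 / R = R + 2 - lamq q := by field_simp; linarith
    rw [e]
    have : (2 * lamq q - (R + 2 - lamq q) - a h) * (R + 1) ≥ 0 := by nlinarith
    by_contra hc; push Not at hc; nlinarith
  -- second orbit
  have hden2 : 1 < 2 * lamq q - a h := by linarith
  have hy0 : 0 < 1 / (2 * lamq q - a h) := by positivity
  have hy1 : 1 / (2 * lamq q - a h) < 1 := by rw [div_lt_one] <;> linarith
  obtain ⟨c, hc0, hcpos, hcrec, hcmax, hcD, hcH⟩ :=
    orbit (Real.pi / q) (1 / (2 * lamq q - a h)) h hθ hang hy0 hy1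
  obtain ⟨hcD', hcH'⟩ := hend _ _ hcD hcH
  have hcH1 : c h = R := by
    have e : 1 / (2 * lamq q - a h) * (2 * lamq q - a h) = 1 := div_mul_cancel₀ _ (by linarith)
    generalize 1 / (2 * lamq q - a h) = y at *
    have e2 : y * (2 * lamq q * R + lamq q + 1 - R) = R + 1 := by
      linear_combination (R + 1) * e + y * haH1
    have e3 : c h * (R * lamq q + 2) = R * (lamq q ^ 2 - 2 * lamq q + 2) + lamq q := by
      linear_combination (2 * lamq q * R + lamq q + 1 - R) * hcH' +
        (c h * (lamq q - 1) - (lamq q ^ 2 - lamq q - 1)) * e2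
    have e4 : 0 < R * lamq q + 2 := by positivity
    apply mul_right_cancel₀ e4.ne'
    linear_combination e3 - lamq q * hR
  change ∀ j < h, a (j + 1) * (lamq q - a j) = 1 at harec
  change ∀ j < h, c (j + 1) * (lamq q - c j) = 1 at hcrec
  clear hend hrec hs0 hs1 hs2 hσ0
  clear_value σ
  generalize lamq q = lam at *
  have hRinv : 1 < 1 / R := by rw [lt_div_iff₀ hR0]; linarith
  have haux : ∀ u v : ℝ, 0 < v → v ≤ R → v * (lam - u) = 1 → u ≤ lam - 1 / R := by
    intro u v h1 h2 h3
    have h4 : lam - u = 1 / v := by field_simp; linarith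
    have h5 := one_div_le_one_div_of_le h1 h2
    linarith
  have haj : ∀ j < h, a j ≤ lam - 1 / R := fun j hj =>
    haux _ _ (hapos (j+1) hj) ((hamax (j+1) hj).trans haR) (harec j hj)
  have hcj : ∀ j < h, c j ≤ lam - 1 / R := fun j hj =>
    haux _ _ (hcpos (j+1) hj) (hcH1 ▸ hcmax (j+1) hj) (hcrec j hj)
  have ha0' : a 0 = 1 / (lam + 1 / R) := by rw [ha0]; field_simp
  -- the invariant
  let Inv : ℕ → ℤ → Prop := fun n e =>
    (∃ l j, n = l + j ∧ j ≤ h ∧ Run A e l j ∧ (e : ℝ) * rr lam A n ≤ a j) ∨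
    (∃ l j, n = l + h + 1 + j ∧ j ≤ h ∧ Run A e l h ∧ A (l + 1 + h) = e * 2 ∧
      Run A e (l + h + 1) j ∧ (e : ℝ) * rr lam A n ≤ c j)
  have hInvR : ∀ (n : ℕ) (e : ℤ), Inv n e → (e : ℝ) * rr lam A n ≤ R := by
    rintro n e (⟨l, j, -, hj, -, hr⟩ | ⟨l, j, -, hj, -, -, -, hr⟩)
    · exact hr.trans ((hamax j hj).trans haR)
    · exact hr.trans (hcH1 ▸ hcmax j hj)
  have hInv0 : ∀ (n : ℕ) (e : ℤ), (e : ℝ) * rr lam A n ≤ a 0 → Inv n e := fun n e hr =>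
    Or.inl ⟨n, 0, rfl, Nat.zero_le _, Run.zero _ _ _, hr⟩
  -- one step in the direction of the sign of the digit
  have hstep : ∀ n, ∀ s m : ℤ, (s = 1 ∨ s = -1) → 1 ≤ m → A (n+1) = s * m → Inv n s →
      0 < (m:ℝ) * lam - s * rr lam A n ∧ Inv (n+1) s := by
    intro n s m hs hm hA hI
    obtain ⟨st, -⟩ := rr_step lam A n s m hs hA
    have hm' : (1:ℝ) ≤ m := by exact_mod_cast hm
    have key : (s:ℝ) * rr lam A n ≤ (m - 1) * lam - 1 / R →
        0 < (m:ℝ) * lam - s * rr lam A n ∧ Inv (n+1) s := by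
      intro hk
      have hp : lam + 1 / R ≤ (m:ℝ) * lam - s * rr lam A n := by linarith
      refine ⟨by linarith, hInv0 _ _ ?_⟩
      rw [st, ha0']
      exact one_div_le_one_div_of_le (by linarith) hp
    have key1 : ∀ u v : ℝ, 0 < v → v * (lam - u) = 1 → (s:ℝ) * rr lam A n ≤ u →
        u ≤ lam - 1 / R → m = 1 →
        0 < (m:ℝ) * lam - s * rr lam A n ∧ (s:ℝ) * rr lam A (n+1) ≤ v := by
      intro u v hv huv hru hu hm1
      have hp : 0 < (m:ℝ) * lam - s * rr lam A n := by subst hm1; push_cast; linarith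
      refine ⟨hp, ?_⟩
      rw [st, div_le_iff₀ hp, hm1]
      push_cast
      have := mul_le_mul_of_nonneg_left (sub_le_sub_left hru lam) hv.le
      linarith
    rcases hI with ⟨l, j, hn, hj, hrun, hr⟩ | ⟨l, j, hn, hj, hrun, h2, hrun2, hr⟩
    · rcases hj.lt_or_eq with hjlt | hjeq
      · by_cases hm1 : m = 1
        · obtain ⟨k1, k2⟩ := key1 _ _ (hapos (j+1) hjlt) (harec j hjlt) hr (haj j hjlt) hm1
          refine ⟨k1, Or.inl ⟨l, j + 1, by omega, hjlt, hrun.succ ?_, k2⟩⟩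
          rw [show l + 1 + j = n + 1 by omega, hA, hm1, mul_one]
        · have hm2 : (2:ℝ) ≤ m := by exact_mod_cast (by omega : 2 ≤ m)
          have := haj j hjlt
          apply key; nlinarith
      · subst hjeq
        by_cases hm1 : m = 1
        · exfalso
          refine no_ones q A hreg s hs l (hh ▸ hrun.succ ?_)
          rw [show l + 1 + j = n + 1 by omega, hA, hm1, mul_one]
        · by_cases hm2 : m = 2
          · subst hm2
            have hp : 0 < 2 * lam - a j := by linarith
            have hp' : 0 < ((2:ℤ):ℝ) * lam - s * rr lam A n := by push_cast; linarith
            refine ⟨hp', Or.inr ⟨l, 0, by omega, Nat.zero_le _, hrun, ?_, Run.zero _ _ _, ?_⟩⟩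
            · rw [← hA]; congr 1; omega
            · rw [st, hc0]
              apply one_div_le_one_div_of_le hp
              push_cast; linarith
          · have hm3 : (3:ℝ) ≤ m := by exact_mod_cast (by omega : 3 ≤ m)
            apply key; nlinarith
    · rcases hj.lt_or_eq with hjlt | hjeq
      · by_cases hm1 : m = 1
        · obtain ⟨k1, k2⟩ := key1 _ _ (hcpos (j+1) hjlt) (hcrec j hjlt) hr (hcj j hjlt) hm1
          refine ⟨k1, Or.inr ⟨l, j + 1, by omega, hjlt, hrun, h2, hrun2.succ ?_, k2⟩⟩
          rw [show l + h + 1 + 1 + j = n + 1 by omega, hA, hm1, mul_one]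
        · have hm2 : (2:ℝ) ≤ m := by exact_mod_cast (by omega : 2 ≤ m)
          have := hcj j hjlt
          apply key; nlinarith
      · exfalso
        subst hjeq
        rw [hh] at hrun h2 hrun2 hn
        refine no_odd q hE A hreg s hs l hrun h2 hrun2 m hm ?_
        rw [← hA]; congr 1; omega
  have hinv : ∀ n, ∀ e : ℤ, e = 1 ∨ e = -1 → Inv n e := by
    intro n
    induction n with
    | zero =>
      intro e he
      apply hInv0
      simp only [rr, mul_zero]
      exact (hapos 0 (Nat.zero_le _)).le
    | succ n ih =>
      obtain ⟨s, m, hs, hm, hA⟩ := sgn _ (hnz n)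
      obtain ⟨hp, hI⟩ := hstep n s m hs hm hA (ih s hs)
      intro e he
      by_cases hes : e = s
      · subst hes; exact hI
      · apply hInv0
        rw [sign_flip hs he hes]
        have h1 := hapos 0 (Nat.zero_le _)
        have h2 : 0 ≤ (s:ℝ) * rr lam A (n+1) := by
          rw [(rr_step lam A n s m hs hA).1]; positivity
        push_cast; linarith
  have habs : ∀ n, |rr lam A n| ≤ R := fun n =>
    abs_of_signs fun e he => hInvR n e (hinv n e he)
  refine conv_of_bound lam A (R * R) (by nlinarith) ?_ ?_
  · intro n
    obtain ⟨s, m, hs, hm, hA⟩ := sgn _ (hnz n)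
    rw [(rr_step lam A n s m hs hA).2]
    apply mul_ne_zero
    · rcases hs with rfl | rfl <;> norm_num
    · exact (hstep n s m hs hm hA (hinv n s hs)).1.ne'
  · intro n
    rw [abs_mul]
    exact mul_le_mul (habs _) (habs _) (abs_nonneg _) hR0.le

/-- Every regular `λ_q`-CF converges: the denominators `q_n` never vanish and the
convergents `p_n/q_n` converge in `ℝ`. -/
theorem stmt1 (q : ℕ) (hq : 3 ≤ q) (A : ℕ → ℤ)
    (hnz : ∀ i, A (i + 1) ≠ 0) (hreg : RegularSeq q (fun i => A (i + 1))) :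
    (∀ n, cfQ (lamq q) A n ≠ 0) ∧
      ∃ x : ℝ, Filter.Tendsto (fun n => cfP (lamq q) A n / cfQ (lamq q) A n)
        Filter.atTop (nhds x) := by
  by_cases hE : Even q
  · exact even_case q hq hE A hnz hreg
  · exact odd_case q hq hE A hnz hreg
end

section
/- Let q ≥ 3 be odd, a_0 ∈ ℤ, and let a_1, …, a_n be nonzero integers such that the finite sequence (a_1, …, a_n, (1)^{h_q}, 2, (1)^{h_q}) (i.e. followed by h_q entries 1, then 2, then h_q entries 1) is q-regular. Then a_n ≠ 1, the finite sequence (a_1, …, a_{n−1}, a_n − 1, (−1)^{h_q}, −2, (−1)^{h_q}) is also q-regular, the last denominators of both finite continued fractions are nonzero, and the values coincide: [a_0; a_1, …, a_n, (1)^{h_q}, 2, (1)^{h_q}] = [a_0; a_1, …, a_{n−1}, a_n − 1, (−1)^{h_q}, −2, (−1)^{h_q}]. -/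
open Filter Topology

/-- one step of the convergent recursion -/
noncomputable def cstep (lam : ℝ) (w : ℝ × ℝ) (a : ℤ) : ℝ × ℝ := ((a : ℝ) * lam * w.1 - w.2, w.1)

lemma foldl_range_Q (lam : ℝ) (A : ℕ → ℤ) (k : ℕ) :
    (List.range k).foldl (fun w i => cstep lam w (A (i + 1))) (1, 0) =
      (cfQ lam A k, if k = 0 then 0 else cfQ lam A (k - 1)) := by
  induction k with
  | zero => simp [cfQ]
  | succ k ih =>
    rw [List.range_succ, List.foldl_append, ih]
    rcases k with _ | k
    · simp [cfQ, cstep]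
    · simp [cfQ, cstep]

lemma foldl_range_P (lam : ℝ) (A : ℕ → ℤ) (k : ℕ) :
    (List.range k).foldl (fun w i => cstep lam w (A (i + 1))) ((A 0 : ℝ) * lam, 1) =
      (cfP lam A k, if k = 0 then 1 else cfP lam A (k - 1)) := by
  induction k with
  | zero => simp [cfP]
  | succ k ih =>
    rw [List.range_succ, List.foldl_append, ih]
    rcases k with _ | k
    · simp [cfP, cstep]
    · simp [cfP, cstep]

lemma list_eq_map_range (L : List ℤ) :
    (List.range L.length).map (fun i => L.getD i 0) = L := by
  apply List.ext_getElem
  · simp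
  · intro i h1 h2
    simp [h2]

lemma cfQ_list (lam : ℝ) (a0 : ℤ) (L : List ℤ) :
    cfQ lam (fun i => (a0 :: L).getD i 0) L.length = (L.foldl (cstep lam) (1, 0)).1 := by
  have h := foldl_range_Q lam (fun i => (a0 :: L).getD i 0) L.length
  conv_rhs => rw [← list_eq_map_range L]
  rw [List.foldl_map]
  simp only [List.getD_cons_succ] at h
  rw [h]

lemma cfP_list (lam : ℝ) (a0 : ℤ) (L : List ℤ) :
    cfP lam (fun i => (a0 :: L).getD i 0) L.length =
      (L.foldl (cstep lam) ((a0 : ℝ) * lam, 1)).1 := by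
  have h := foldl_range_P lam (fun i => (a0 :: L).getD i 0) L.length
  conv_rhs => rw [← list_eq_map_range L]
  rw [List.foldl_map]
  simp only [List.getD_cons_succ, List.getD_cons_zero] at h
  rw [h]

lemma foldl_neg (lam : ℝ) (L : List ℤ) (w : ℝ × ℝ) :
    (L.map (fun x => -x)).foldl (cstep lam) w =
      ((-1) ^ L.length * (L.foldl (cstep lam) (w.1, -w.2)).1,
        -((-1) ^ L.length * (L.foldl (cstep lam) (w.1, -w.2)).2)) := by
  induction L using List.reverseRecOn with
  | nil => simp
  | append_singleton L a ih =>
    rw [List.map_append, List.foldl_append, ih, List.foldl_append]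
    simp only [List.map_cons, List.map_nil, List.foldl_cons, List.foldl_nil, cstep,
      List.length_append, List.length_cons, List.length_nil, pow_succ, Int.cast_neg]
    ext <;> simp <;> ring

/-- normalized sines -/
noncomputable def sn (q k : ℕ) : ℝ := Real.sin (k * (Real.pi / q)) / Real.sin (Real.pi / q)

lemma sin_pos_q (q : ℕ) (hq : 3 ≤ q) : 0 < Real.sin (Real.pi / q) := by
  have h3 : (3 : ℝ) ≤ q := by exact_mod_cast hq
  apply Real.sin_pos_of_pos_of_lt_pi
  · have := Real.pi_pos
    positivity
  · rw [div_lt_iff₀ (by linarith)]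
    nlinarith [Real.pi_pos]

lemma sn_zero (q : ℕ) : sn q 0 = 0 := by simp [sn]

lemma sn_one (q : ℕ) (hq : 3 ≤ q) : sn q 1 = 1 := by
  have := (sin_pos_q q hq).ne'
  simp [sn, this]

lemma sn_rec (q : ℕ) (k : ℕ) : sn q (k + 2) = lamq q * sn q (k + 1) - sn q k := by
  unfold sn lamq
  rw [← mul_div_assoc (2 * Real.cos (Real.pi / q)), ← sub_div]
  congr 1
  have e1 : ((k + 2 : ℕ) : ℝ) * (Real.pi / q) = ((k + 1 : ℕ) : ℝ) * (Real.pi / q) + Real.pi / q := by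
    push_cast; ring
  have e2 : (k : ℝ) * (Real.pi / q) = ((k + 1 : ℕ) : ℝ) * (Real.pi / q) - Real.pi / q := by
    push_cast; ring
  rw [e1, e2, Real.sin_add, Real.sin_sub]
  ring

lemma sn_pos (q : ℕ) (hq : 3 ≤ q) (k : ℕ) (hk : 1 ≤ k) (hkq : k < q) : 0 < sn q k := by
  have h3 : (3 : ℝ) ≤ q := by exact_mod_cast hq
  have hk' : (1 : ℝ) ≤ k := by exact_mod_cast hk
  have hkq' : (k : ℝ) < q := by exact_mod_cast hkq
  apply div_pos _ (sin_pos_q q hq)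
  have hp := Real.pi_pos
  apply Real.sin_pos_of_pos_of_lt_pi
  · positivity
  · rw [← mul_div_assoc, div_lt_iff₀ (by linarith)]
    nlinarith

lemma sn_symm (q : ℕ) (hq : 3 ≤ q) (h : ℕ) (hh : q = 2 * h + 3) : sn q (h + 2) = sn q (h + 1) := by
  have h3 : (3 : ℝ) ≤ q := by exact_mod_cast hq
  unfold sn
  congr 1
  rw [← Real.sin_pi_sub]
  congr 1
  have : (q : ℝ) ≠ 0 := by linarith
  field_simp
  rw [hh]; push_cast; ring

lemma lamq_lt_two (q : ℕ) (hq : 3 ≤ q) : lamq q < 2 := by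
  have h3 : (3 : ℝ) ≤ q := by exact_mod_cast hq
  have hs := sin_pos_q q hq
  unfold lamq
  nlinarith [Real.sin_sq_add_cos_sq (Real.pi / q)]

lemma one_le_lamq (q : ℕ) (hq : 3 ≤ q) : 1 ≤ lamq q := by
  have h3 : (3 : ℝ) ≤ q := by exact_mod_cast hq
  have hp := Real.pi_pos
  have : Real.cos (Real.pi / 3) ≤ Real.cos (Real.pi / q) := by
    apply Real.cos_le_cos_of_nonneg_of_le_pi
    · positivity
    · linarith
    · gcongr
  rw [Real.cos_pi_div_three] at this
  unfold lamq
  linarith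

lemma foldl_ones (q : ℕ) (hq : 3 ≤ q) (k : ℕ) (w : ℝ × ℝ) :
    (List.replicate k (1 : ℤ)).foldl (cstep (lamq q)) w =
      (sn q (k + 1) * w.1 - sn q k * w.2,
        sn q k * w.1 - (lamq q * sn q k - sn q (k + 1)) * w.2) := by
  induction k with
  | zero => simp [sn_zero, sn_one q hq]
  | succ k ih =>
    rw [List.replicate_succ', List.foldl_append, ih]
    have := sn_rec q k
    simp only [List.foldl_cons, List.foldl_nil, cstep]
    ext
    · simp only [this]; push_cast; ring
    · simp only [this]; ring

lemma foldl_tail (q : ℕ) (hq : 3 ≤ q) (h : ℕ) (hh : q = 2 * h + 3) (w : ℝ × ℝ) :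
    ((List.replicate h (1 : ℤ) ++ 2 :: List.replicate h 1).foldl (cstep (lamq q)) w).1 =
      sn q (h + 1) ^ 2 * (2 * w.1 - lamq q * w.2) := by
  have e1 := sn_rec q h
  rw [sn_symm q hq h hh] at e1
  have e2 : sn q h = (lamq q - 1) * sn q (h + 1) := by linarith
  rw [List.foldl_append, List.foldl_cons, foldl_ones q hq, foldl_ones q hq]
  simp only [cstep, e2]
  push_cast
  ring

lemma foldl_tail_neg (q : ℕ) (hq : 3 ≤ q) (h : ℕ) (hh : q = 2 * h + 3) (w : ℝ × ℝ) :
    ((List.replicate h (-1 : ℤ) ++ (-2) :: List.replicate h (-1)).foldl (cstep (lamq q)) w).1 =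
      -(sn q (h + 1) ^ 2 * (2 * w.1 + lamq q * w.2)) := by
  have e : (List.replicate h (-1 : ℤ) ++ (-2) :: List.replicate h (-1)) =
      (List.replicate h (1 : ℤ) ++ 2 :: List.replicate h 1).map (fun x => -x) := by simp
  rw [e, foldl_neg]
  simp only [foldl_tail q hq h hh]
  have e3 : (List.replicate h (1 : ℤ) ++ 2 :: List.replicate h 1).length = 2 * h + 1 := by
    simp; ring
  rw [e3, pow_succ, pow_mul]
  norm_num

/-- The key bound on denominators. -/
lemma den_bound (q : ℕ) (hq : 3 ≤ q) (h : ℕ) (hh : q = 2 * h + 3) (L : List ℤ)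
    (hnz : ∀ x ∈ L, x ≠ 0)
    (hr : ∀ ε : ℤ, ε = 1 ∨ ε = -1 → ¬ List.replicate (h + 1) ε <:+: L) :
    (L.foldl (cstep (lamq q)) (1, 0)).1 ≠ 0 ∧
    ∀ ε : ℤ, ε = 1 ∨ ε = -1 → ∀ j ≤ h, ¬ List.replicate (j + 1) ε <:+ L →
      (ε : ℝ) * ((L.foldl (cstep (lamq q)) (1, 0)).2 / (L.foldl (cstep (lamq q)) (1, 0)).1)
        ≤ sn q (j + 1) / sn q (j + 2) := by
  have hl := one_le_lamq q hq
  induction L using List.reverseRecOn with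
  | nil =>
    refine ⟨by simp, fun ε hε j hj _ => ?_⟩
    have h1 := sn_pos q hq (j + 1) (by omega) (by omega)
    have h2 := sn_pos q hq (j + 2) (by omega) (by omega)
    simp only [List.foldl_nil, zero_div, mul_zero]
    positivity
  | append_singleton L a ih =>
    obtain ⟨hu, hb⟩ := ih (fun x hx => hnz x (by simp [hx]))
      (fun ε hε hi => hr ε hε (hi.trans (List.prefix_append L [a]).isInfix))
    have ha : a ≠ 0 := hnz a (by simp)
    rw [List.foldl_append]
    generalize L.foldl (cstep (lamq q)) (1, 0) = w at hu hb
    obtain ⟨u, v⟩ := w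
    simp only [List.foldl_cons, List.foldl_nil, cstep] at hu hb ⊢
    set t := v / u with ht
    have hv : v = t * u := by rw [ht]; field_simp
    have hfac : (a : ℝ) * lamq q * u - v = u * (a * lamq q - t) := by rw [hv]; ring
    have hone : ∀ ε : ℤ, ε = 1 ∨ ε = -1 → (ε : ℝ) * t ≤ 1 := by
      intro ε hε
      have h1 := hb ε hε h le_rfl (fun hs => hr ε hε
        (hs.isInfix.trans (List.prefix_append L [a]).isInfix))
      rw [sn_symm q hq h hh, div_self (sn_pos q hq (h + 1) (by omega) (by omega)).ne'] at h1
      exact h1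
    have ht1 : t ≤ 1 := by simpa using hone 1 (by simp)
    have ht2 : -t ≤ 1 := by simpa using hone (-1) (by simp)
    -- the case of a digit equal to the sign
    have hcase : ∀ ε : ℤ, ε = 1 ∨ ε = -1 → a = ε → ∀ j ≤ h,
        ¬ List.replicate (j + 1) ε <:+ L ++ [a] →
        sn q (j + 2) / sn q (j + 1) ≤ lamq q - ε * t := by
      intro ε hε hae j hj hs
      rcases j with _ | j
      · exact absurd (by simp [hae]) hs
      · have hs' : ¬ List.replicate (j + 1) ε <:+ L := by
          intro hs'
          apply hs
          obtain ⟨X, hX⟩ := hs'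
          refine ⟨X, ?_⟩
          rw [List.replicate_succ', ← List.append_assoc, hX, hae]
        have h1 := hb ε hε j (by omega) hs'
        have p1 := sn_pos q hq (j + 1) (by omega) (by omega)
        have p2 := sn_pos q hq (j + 2) (by omega) (by omega)
        have hrec := sn_rec q (j + 1)
        have : sn q (j + 1 + 2) / sn q (j + 1 + 1) = lamq q - sn q (j + 1) / sn q (j + 2) := by
          rw [hrec]; field_simp
        rw [this]; linarith
    have hnosuf : ∀ ε : ℤ, ε = 1 ∨ ε = -1 → ¬ List.replicate (h + 1) ε <:+ L ++ [a] :=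
      fun ε hε hs => hr ε hε hs.isInfix
    have hne : (a : ℝ) * lamq q - t ≠ 0 := by
      have p1 := sn_pos q hq (h + 1) (by omega) (by omega)
      have p2 := sn_pos q hq (h + 2) (by omega) (by omega)
      have p3 : 0 < sn q (h + 2) / sn q (h + 1) := by positivity
      by_cases h1 : a = 1
      · have := hcase 1 (by simp) h1 h le_rfl (hnosuf 1 (by simp))
        rw [h1]; push_cast at this ⊢; intro h0; linarith
      by_cases h2 : a = -1
      · have := hcase (-1) (by simp) h2 h le_rfl (hnosuf (-1) (by simp))
        rw [h2]; push_cast at this ⊢; intro h0; linarith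
      rcases (by omega : 2 ≤ a ∨ a ≤ -2) with h3 | h3
      · have : (2 : ℝ) ≤ a := by exact_mod_cast h3
        have : 2 * lamq q ≤ a * lamq q := by gcongr
        intro h0
        rcases eq_or_lt_of_le hl with h5 | h5
        · linarith
        · linarith
      · have : (a : ℝ) ≤ -2 := by exact_mod_cast h3
        have : (a : ℝ) * lamq q ≤ -2 * lamq q := by gcongr
        intro h0
        linarith
    refine ⟨by rw [hfac]; exact mul_ne_zero hu hne, ?_⟩
    intro ε hε j hj hs
    have p1 := sn_pos q hq (j + 1) (by omega) (by omega)
    have p2 := sn_pos q hq (j + 2) (by omega) (by omega)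
    have p0 : 0 ≤ sn q j := by
      rcases j with _ | j
      · rw [sn_zero]
      · exact (sn_pos q hq (j + 1) (by omega) (by omega)).le
    have hdiv : u / ((a : ℝ) * lamq q * u - v) = 1 / (a * lamq q - t) := by
      rw [hfac]; field_simp
    have hεε : (ε : ℝ) * ε = 1 := by rcases hε with rfl | rfl <;> norm_num
    have hεt : (ε : ℝ) * (1 / (a * lamq q - t)) = 1 / ((ε * a : ℤ) * lamq q - ε * t) := by
      rcases hε with rfl | rfl
      · push_cast; ring
      · push_cast
        have : (-1 * (a : ℝ) * lamq q - -1 * t) = -(a * lamq q - t) := by ring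
        rw [this, div_neg]; ring
    rw [hdiv, hεt]
    by_cases hae : a = ε
    · have h1 := hcase ε hε hae j hj hs
      have : ε * a = 1 := by rw [hae]; exact_mod_cast hεε
      rw [this]
      have p3 : 0 < sn q (j + 2) / sn q (j + 1) := by positivity
      have := one_div_le_one_div_of_le p3 h1
      rw [one_div_div] at this
      simpa using this
    · have hεa1 : ε * a ≠ 1 := by
        intro h1
        apply hae
        rcases hε with rfl | rfl <;> omega
      have hεa0 : ε * a ≠ 0 := by
        rcases hε with rfl | rfl <;> omega
      have h1 := hone ε hε
      have h2 : -1 ≤ (ε : ℝ) * t := by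
        rcases hε with rfl | rfl <;> push_cast <;> linarith
      have h3 : 0 ≤ sn q (j + 1) / sn q (j + 2) := by positivity
      rcases (by omega : 2 ≤ ε * a ∨ ε * a ≤ -1) with h4 | h4
      · have h5 : (2 : ℝ) ≤ (ε * a : ℤ) := by exact_mod_cast h4
        have h6 : 2 * lamq q ≤ (ε * a : ℤ) * lamq q := by gcongr
        have h7 : lamq q ≤ (ε * a : ℤ) * lamq q - ε * t := by linarith
        have h8 := one_div_le_one_div_of_le (by linarith) h7
        refine h8.trans ?_
        rw [div_le_div_iff₀ (by linarith) p2, sn_rec]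
        linarith
      · have h5 : ((ε * a : ℤ) : ℝ) ≤ -1 := by exact_mod_cast h4
        have h6 : (ε * a : ℤ) * lamq q ≤ -1 * lamq q := by gcongr
        refine le_trans ?_ h3
        apply div_nonpos_of_nonneg_of_nonpos zero_le_one
        linarith

lemma infix_split (B D T : List ℤ) (c : ℤ) (h : B <:+: D ++ c :: T) :
    B <:+: D ∨ (∃ B1 B2, B = B1 ++ c :: B2 ∧ B1 <:+ D ∧ B2 <+: T) ∨ B <:+: T := by
  obtain ⟨X, Y, h⟩ := h
  rw [List.append_assoc, List.append_eq_append_iff] at h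
  rcases h with ⟨Z, h1, h2⟩ | ⟨Z, h1, h2⟩
  · rw [List.append_eq_append_iff] at h2
    rcases h2 with ⟨W, h3, h4⟩ | ⟨W, h3, h4⟩
    · left
      exact ⟨X, W, by rw [h1, h3, List.append_assoc]⟩
    · rcases W with _ | ⟨d, W⟩
      · left
        exact ⟨X, [], by simp [h1, h3]⟩
      · simp only [List.cons_append, List.cons.injEq] at h4
        right; left
        refine ⟨Z, W, ?_, ⟨X, h1.symm⟩, ⟨Y, h4.2.symm⟩⟩
        rw [h3, h4.1]
  · rcases Z with _ | ⟨d, Z⟩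
    · rcases B with _ | ⟨b, B⟩
      · left; simp
      · simp only [List.nil_append, List.cons_append, List.cons.injEq] at h2
        right; left
        exact ⟨[], B, by simp [h2.1], by simp, ⟨Y, h2.2.symm⟩⟩
    · simp only [List.cons_append, List.cons.injEq] at h2
      right; right
      exact ⟨Z, Y, by rw [h2.2, List.append_assoc]⟩

lemma reg_main (q : ℕ) (hqe : ¬ Even q) (D : List ℤ) (a : ℤ) (ha0 : a ≠ 0)
    (hreg : RegularList q
      (D ++ a :: (List.replicate (hQ q) 1 ++ 2 :: List.replicate (hQ q) 1))) :
    RegularList q (D ++ (a - 1) ::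
      (List.replicate (hQ q) (-1) ++ (-2) :: List.replicate (hQ q) (-1))) := by
  intro B hB hF
  have hTneg : ∀ x ∈ (List.replicate (hQ q) (-1 : ℤ) ++ (-2) :: List.replicate (hQ q) (-1)),
      x < 0 := by
    intro x hx
    simp only [List.mem_append, List.mem_replicate, List.mem_cons] at hx
    omega
  rcases infix_split _ _ _ _ hB with h | ⟨B1, B2, rfl, h1, h2⟩ | h
  · exact hreg B (h.trans (List.prefix_append _ _).isInfix) hF
  · obtain ⟨X, hX⟩ := h1
    obtain ⟨ε, hε, hF⟩ := hF
    rw [if_neg hqe] at hF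
    have hB2neg : ∀ x ∈ B2, x < 0 := fun x hx => hTneg x (h2.subset hx)
    rcases hF with hF | ⟨m, hm, hF⟩
    · have hc : a - 1 = ε := by
        apply List.eq_of_mem_replicate (n := hQ q + 1)
        rw [← hF]; simp
      have hε1 : ε = 1 := by omega
      subst hε1
      have hB2 : B2 = [] := by
        rw [List.eq_nil_iff_forall_not_mem]
        intro x hx
        have := hB2neg x hx
        have : x = 1 := by
          apply List.eq_of_mem_replicate (n := hQ q + 1)
          rw [← hF]; simp [hx]
        omega
      subst hB2
      rw [List.replicate_succ'] at hF
      have hB1 := (List.append_inj' hF rfl).1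
      apply hreg (List.replicate (hQ q) 1 ++ 2 :: (List.replicate (hQ q) 1 ++ [2]))
      · refine ⟨X, List.replicate (hQ q) 1, ?_⟩
        rw [← hX, hB1, show a = 2 by omega]
        simp
      · refine ⟨1, Or.inl rfl, Or.inr ?_⟩
        rw [if_neg hqe]
        exact ⟨2, by norm_num, by simp⟩
    · rcases List.eq_nil_or_concat B2 with rfl | ⟨B3, l, rfl⟩
      · rw [← List.cons_append, ← List.append_assoc] at hF
        obtain ⟨hB1, hc⟩ := List.append_inj' hF rfl
        simp only [List.cons.injEq, and_true] at hc
        apply hreg (B1 ++ [a])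
        · refine ⟨X, (List.replicate (hQ q) 1 ++ 2 :: List.replicate (hQ q) 1), ?_⟩
          rw [← hX]; simp
        · refine ⟨ε, hε, Or.inr ?_⟩
          rw [if_neg hqe]
          refine ⟨ε * a, ?_, ?_⟩
          · rcases hε with rfl | rfl <;> omega
          · rw [hB1]
            rcases hε with rfl | rfl <;> simp
      · rw [List.concat_eq_append, ← List.cons_append, ← List.append_assoc, ← List.cons_append,
          ← List.append_assoc] at hF
        obtain ⟨hF, hl⟩ := List.append_inj' hF rfl
        simp only [List.cons.injEq, and_true] at hl
        have hlneg := hB2neg l (by simp)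
        have hε1 : ε = -1 := by
          rcases hε with rfl | rfl
          · omega
          · rfl
        subst hε1
        have hc : a - 1 = -2 := by
          have : a - 1 ∈ List.replicate (hQ q) (-1 : ℤ) ++ -1 * 2 :: List.replicate (hQ q) (-1) := by
            rw [← hF]; simp
          simp only [List.mem_append, List.mem_replicate, List.mem_cons] at this
          omega
        rw [hc] at hF
        have hB1 : B1 = List.replicate (hQ q) (-1) := by
          rw [List.append_eq_append_iff] at hF
          rcases hF with ⟨Z, h3, h4⟩ | ⟨Z, h3, h4⟩
          · rcases Z with _ | ⟨d, Z⟩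
            · simp at h3; exact h3.symm
            · simp only [List.cons_append, List.cons.injEq] at h4
              have : d = -1 := by
                apply List.eq_of_mem_replicate (n := hQ q)
                rw [h3]; simp
              omega
          · rcases Z with _ | ⟨d, Z⟩
            · simpa using h3
            · simp only [List.cons_append, List.cons.injEq] at h4
              have : (-2 : ℤ) = -1 := by
                apply List.eq_of_mem_replicate (n := hQ q)
                rw [h4.2]; simp
              omega
        apply hreg (List.replicate (hQ q + 1) (-1))
        · refine ⟨X, (List.replicate (hQ q) 1 ++ 2 :: List.replicate (hQ q) 1), ?_⟩
          rw [← hX, hB1, List.replicate_succ', show a = -1 by omega]; simp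
        · exact ⟨-1, Or.inr rfl, Or.inl rfl⟩
  · obtain ⟨ε, hε, hF⟩ := hF
    rw [if_neg hqe] at hF
    rcases hF with hF | ⟨m, hm, hF⟩
    · have hεneg : ε < 0 := by
        apply hTneg
        apply h.subset
        rw [hF]; simp
      have hε1 : ε = -1 := by omega
      subst hε1
      rcases infix_split _ _ _ _ h with h | ⟨B1, B2, rfl, -, -⟩ | h
      · have := h.length_le
        rw [hF] at this
        simp at this
      · have : (-2 : ℤ) = -1 := by
          apply List.eq_of_mem_replicate (n := hQ q + 1)
          rw [← hF]; simp
        omega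
      · have := h.length_le
        rw [hF] at this
        simp at this
    · have := h.length_le
      rw [hF] at this
      simp at this

/-- For odd `q ≥ 3`: if `(a₁,…,aₙ,(1)^{h_q},2,(1)^{h_q})` is `q`-regular, then `aₙ ≠ 1`,
the sequence `(a₁,…,aₙ₋₁,aₙ-1,(-1)^{h_q},-2,(-1)^{h_q})` is `q`-regular, both finite continued
fractions have nonzero last denominator, and their values coincide. -/
theorem stmt4 (q : ℕ) (hq : 3 ≤ q) (hqo : Odd q) (a0 : ℤ) (L : List ℤ) (hL : L ≠ [])
    (hnz : ∀ x ∈ L, x ≠ 0)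
    (hreg : RegularList q
      (L ++ (List.replicate (hQ q) 1 ++ 2 :: List.replicate (hQ q) 1))) :
    L.getLast hL ≠ 1 ∧
    RegularList q (L.dropLast ++ (L.getLast hL - 1) ::
      (List.replicate (hQ q) (-1) ++ (-2) :: List.replicate (hQ q) (-1))) ∧
    cfDenList (lamq q) a0
      (L ++ (List.replicate (hQ q) 1 ++ 2 :: List.replicate (hQ q) 1)) ≠ 0 ∧
    cfDenList (lamq q) a0 (L.dropLast ++ (L.getLast hL - 1) ::
      (List.replicate (hQ q) (-1) ++ (-2) :: List.replicate (hQ q) (-1))) ≠ 0 ∧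
    cfValList (lamq q) a0
      (L ++ (List.replicate (hQ q) 1 ++ 2 :: List.replicate (hQ q) 1)) =
      cfValList (lamq q) a0 (L.dropLast ++ (L.getLast hL - 1) ::
        (List.replicate (hQ q) (-1) ++ (-2) :: List.replicate (hQ q) (-1))) := by
  obtain ⟨D, a, rfl⟩ : ∃ D a, L = D ++ [a] :=
    ⟨L.dropLast, L.getLast hL, (List.dropLast_append_getLast hL).symm⟩
  have hqe : ¬ Even q := Nat.not_even_iff_odd.mpr hqo
  have hh : q = 2 * hQ q + 3 := by
    unfold hQ
    rw [if_neg hqe]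
    obtain ⟨k, hk⟩ := hqo
    omega
  have ha0 : a ≠ 0 := hnz a (by simp)
  simp only [List.getLast_append_singleton, List.dropLast_concat]
  have hreg' := hreg
  rw [List.append_assoc, List.singleton_append] at hreg'
  have hbound := den_bound q hq (hQ q) hh (D ++ [a]) hnz (fun ε hε hi =>
    hreg _ (hi.trans (List.prefix_append _ _).isInfix) ⟨ε, hε, Or.inl rfl⟩)
  have hs := sn_pos q hq (hQ q + 1) (by omega) (by omega)
  have hl1 := one_le_lamq q hq
  have hl2 := lamq_lt_two q hq
  -- both final entries, for any initial vector
  have hfin1 : ∀ w, ((D ++ [a] ++ (List.replicate (hQ q) 1 ++ 2 ::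
      List.replicate (hQ q) 1)).foldl (cstep (lamq q)) w).1 =
      sn q (hQ q + 1) ^ 2 * (2 * ((D ++ [a]).foldl (cstep (lamq q)) w).1 -
        lamq q * ((D ++ [a]).foldl (cstep (lamq q)) w).2) := by
    intro w
    rw [List.foldl_append, foldl_tail q hq _ hh]
  have hfin2 : ∀ w, ((D ++ (a - 1) :: (List.replicate (hQ q) (-1) ++ (-2) ::
      List.replicate (hQ q) (-1))).foldl (cstep (lamq q)) w).1 =
      -(sn q (hQ q + 1) ^ 2 * (2 * ((D ++ [a]).foldl (cstep (lamq q)) w).1 -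
        lamq q * ((D ++ [a]).foldl (cstep (lamq q)) w).2)) := by
    intro w
    rw [List.foldl_append, List.foldl_cons, foldl_tail_neg q hq _ hh, List.foldl_append]
    simp only [List.foldl_cons, List.foldl_nil, cstep]
    push_cast
    ring
  have hden : sn q (hQ q + 1) ^ 2 * (2 * ((D ++ [a]).foldl (cstep (lamq q)) (1, 0)).1 -
        lamq q * ((D ++ [a]).foldl (cstep (lamq q)) (1, 0)).2) ≠ 0 := by
    obtain ⟨hu, hb⟩ := hbound
    have hns : ∀ ε : ℤ, ε = 1 ∨ ε = -1 → ¬ List.replicate (hQ q + 1) ε <:+ D ++ [a] :=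
      fun ε hε hi => hreg _ (hi.isInfix.trans (List.prefix_append _ _).isInfix)
        ⟨ε, hε, Or.inl rfl⟩
    have h1 := hb 1 (by simp) (hQ q) le_rfl (hns 1 (by simp))
    rw [sn_symm q hq _ hh, div_self hs.ne'] at h1
    generalize (D ++ [a]).foldl (cstep (lamq q)) (1, 0) = w at *
    obtain ⟨u, v⟩ := w
    simp only at *
    have e : 2 * u - lamq q * v = u * (2 - lamq q * (v / u)) := by field_simp
    rw [e]
    refine mul_ne_zero (by positivity) (mul_ne_zero hu ?_)
    push_cast at h1
    rw [one_mul] at h1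
    nlinarith
  refine ⟨?_, reg_main q hqe D a ha0 hreg', ?_, ?_, ?_⟩
  · rintro rfl
    apply hreg' (List.replicate (hQ q + 1) 1)
    · refine ⟨D, 2 :: List.replicate (hQ q) 1, ?_⟩
      rw [List.replicate_succ]; simp
    · exact ⟨1, Or.inl rfl, Or.inl rfl⟩
  · unfold cfDenList
    rw [cfQ_list, hfin1]
    exact hden
  · unfold cfDenList
    rw [cfQ_list, hfin2]
    exact neg_ne_zero.mpr hden
  · unfold cfValList
    rw [cfQ_list, cfQ_list, cfP_list, cfP_list, hfin1, hfin1, hfin2, hfin2, neg_div_neg_eq]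
end

section
/- Let q ≥ 3 and let x = [a_0; a_1, a_2, …] and y = [b_0; b_1, b_2, …] be values of infinite regular λ_q-CFs whose digit sequences are not identical, and let n be the least index with a_n ≠ b_n. Then x < y if and only if one of the following holds: (i) n = 0 and a_0 < b_0; (ii) n ≥ 1, a_n·b_n < 0 and a_n > 0; (iii) n ≥ 1, a_n·b_n > 0 and a_n < b_n. -/
open Filter Topology

/-- Boundary word data. -/
structure BWord (lam : ℝ) (L : ℕ) (w : ℕ → ℤ) (φ : ℕ → ℝ) : Prop where
  lam_pos : 0 < lam
  zero : φ 0 = -(lam / 2)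
  np : ∀ j ≤ L, φ j ≤ 0
  w_pos : ∀ j, 1 ≤ w j
  den_pos : ∀ j < L, 0 < (w j : ℝ) * lam + φ (j + 1)
  rec_eq : ∀ j < L, φ j = -1 / ((w j : ℝ) * lam + φ (j + 1))

/-- Combinatorial regularity with respect to a boundary word. -/
def WReg (L : ℕ) (w : ℕ → ℤ) (a : ℕ → ℤ) : Prop :=
  ∀ k j : ℕ, j ≤ L → ∀ ε : ℤ, (ε = 1 ∨ ε = -1) → (∀ i < j, a (k + i) = ε * w i) →
    ε * a (k + j) < 0 ∨ (j < L ∧ w j ≤ ε * a (k + j))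

lemma neg_one_div_le {D X : ℝ} (hD : 0 < D) (h : D ≤ X) : -1 / D ≤ -1 / X := by
  have := one_div_le_one_div_of_le hD h
  rw [neg_div, neg_div]; linarith

lemma neg_one_div_lt {D X : ℝ} (hD : 0 < D) (h : D < X) : -1 / D < -1 / X := by
  have := one_div_lt_one_div_of_lt hD h
  rw [neg_div, neg_div]; linarith

lemma neg_one_div_pos {X : ℝ} (h : X < 0) : 0 < -1 / X :=
  div_pos_of_neg_of_neg (by norm_num) h

lemma step_aux {lam : ℝ} {L : ℕ} {w : ℕ → ℤ} {φ : ℕ → ℝ} (W : BWord lam L w φ)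
    {b : ℤ} {t : ℝ} (h1 : -(lam / 2) ≤ t) (h2 : t ≤ lam / 2) {j : ℕ} (hj : j ≤ L)
    (hb : b < 0 ∨ (j < L ∧ w j ≤ b)) :
    φ j < -1 / ((b : ℝ) * lam + t) ∨ (j < L ∧ b = w j) := by
  have hl := W.lam_pos
  rcases hb with hb | ⟨hjL, hb⟩
  · left
    have hb' : (b : ℝ) ≤ -1 := by exact_mod_cast (by omega : b ≤ -1)
    have : (b : ℝ) * lam + t < 0 := by nlinarith
    exact lt_of_le_of_lt (W.np j hj) (neg_one_div_pos this)
  · rcases hb.eq_or_lt with hb | hb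
    · exact Or.inr ⟨hjL, hb.symm⟩
    · left
      have hb' : (w j : ℝ) + 1 ≤ b := by exact_mod_cast hb
      rw [W.rec_eq j hjL]
      apply neg_one_div_lt (W.den_pos j hjL)
      have := W.np (j + 1) hjL
      nlinarith

/-- finite tails -/
noncomputable def tailT (lam : ℝ) (A : ℕ → ℤ) : ℕ → ℕ → ℝ
  | 0, _ => 0
  | (n + 1), k => -1 / ((A (k + 1) : ℝ) * lam + tailT lam A n (k + 1))

lemma eps_div {ε : ℤ} (he : ε = 1 ∨ ε = -1) (a : ℤ) (lam t : ℝ) :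
    (ε : ℝ) * (-1 / ((a : ℝ) * lam + t)) = -1 / (((ε * a : ℤ) : ℝ) * lam + ε * t) := by
  rcases he with rfl | rfl
  · simp
  · push_cast
    rw [show (-1 * (a : ℝ) * lam + -1 * t) = -((a : ℝ) * lam + t) by ring, div_neg]; ring

lemma abs_of_eps {lam t : ℝ} (h : ∀ ε : ℤ, (ε = 1 ∨ ε = -1) → -(lam / 2) ≤ (ε : ℝ) * t)
    (ε : ℤ) (he : ε = 1 ∨ ε = -1) : -(lam / 2) ≤ (ε : ℝ) * t ∧ (ε : ℝ) * t ≤ lam / 2 := by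
  have h1 := h 1 (Or.inl rfl)
  have h2 := h (-1) (Or.inr rfl)
  push_cast at h1 h2
  rcases he with rfl | rfl <;> push_cast <;> constructor <;> linarith

lemma state_succ {w : ℕ → ℤ} {A : ℕ → ℤ} {k j : ℕ} {ε : ℤ} (he : ε = 1 ∨ ε = -1)
    (hs : ∀ i < j, A (k + i + 1) = ε * w i) (hb : ε * A (k + j + 1) = w j) :
    ∀ i < j + 1, A (k + i + 1) = ε * w i := by
  intro i hi
  rcases Nat.lt_succ_iff_lt_or_eq.mp hi with h | h
  · exact hs i h
  · subst h
    rw [← hb]; rcases he with rfl | rfl <;> ring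

lemma tail_bound {lam : ℝ} {L : ℕ} {w : ℕ → ℤ} {φ : ℕ → ℝ} (W : BWord lam L w φ)
    {A : ℕ → ℤ} (hA : WReg L w (fun i => A (i + 1))) (n : ℕ) :
    ∀ k j : ℕ, j ≤ L → ∀ ε : ℤ, (ε = 1 ∨ ε = -1) → (∀ i < j, A (k + i + 1) = ε * w i) →
      φ j ≤ (ε : ℝ) * tailT lam A n (k + j) := by
  induction n with
  | zero => intro k j hj ε _ _; simpa [tailT] using W.np j hj
  | succ n ih =>
    intro k j hj ε he hs
    have hab := abs_of_eps (lam := lam) (t := tailT lam A n (k + j + 1)) (fun ε' he' => by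
      have := ih (k + j + 1) 0 (Nat.zero_le _) ε' he' (by simp)
      rwa [W.zero] at this) ε he
    have hb := hA k j hj ε he hs
    rw [tailT, eps_div he]
    rcases step_aux W hab.1 hab.2 hj hb with h | ⟨hjL, h⟩
    · exact h.le
    · rw [W.rec_eq j hjL]
      apply neg_one_div_le (W.den_pos j hjL)
      have := ih k (j + 1) hjL ε he (state_succ he hs h)
      have h' : ((ε * A (k + j + 1) : ℤ) : ℝ) = w j := by exact_mod_cast h
      rw [h']
      rw [← add_assoc] at this
      linarith

lemma tail_abs {lam : ℝ} {L : ℕ} {w : ℕ → ℤ} {φ : ℕ → ℝ} (W : BWord lam L w φ)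
    {A : ℕ → ℤ} (hA : WReg L w (fun i => A (i + 1))) (n k : ℕ) :
    |tailT lam A n k| ≤ lam / 2 := by
  have h1 := tail_bound W hA n k 0 (Nat.zero_le _) 1 (Or.inl rfl) (by simp)
  have h2 := tail_bound W hA n k 0 (Nat.zero_le _) (-1) (Or.inr rfl) (by simp)
  rw [W.zero] at h1 h2
  push_cast at h1 h2
  rw [abs_le]; constructor <;> simp at * <;> linarith

lemma den_ne {lam : ℝ} (hl : 0 < lam) {a : ℤ} (ha : a ≠ 0) {t : ℝ} (ht : |t| ≤ lam / 2) :
    (a : ℝ) * lam + t ≠ 0 := by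
  rw [abs_le] at ht
  rcases lt_or_gt_of_ne ha with h | h
  · have : (a : ℝ) ≤ -1 := by exact_mod_cast (by omega : a ≤ -1)
    have : (a : ℝ) * lam + t < 0 := by nlinarith
    exact this.ne
  · have : (1 : ℝ) ≤ a := by exact_mod_cast (by omega : 1 ≤ a)
    have : 0 < (a : ℝ) * lam + t := by nlinarith
    exact this.ne'

lemma shift_PQ (lam : ℝ) (A : ℕ → ℤ) (n : ℕ) :
    (cfP lam A (n + 1) = (A 0 : ℝ) * lam * cfP lam (fun i => A (i + 1)) n
      - cfQ lam (fun i => A (i + 1)) n) ∧ cfQ lam A (n + 1) = cfP lam (fun i => A (i + 1)) n := by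
  induction n using Nat.twoStepInduction with
  | zero => simp [cfP, cfQ]; ring
  | one => simp [cfP, cfQ]; ring
  | more n ih1 ih2 =>
    constructor
    · rw [cfP, ih1.1, ih2.1, cfP, cfQ]; ring
    · rw [cfQ, ih1.2, ih2.2, cfP]

lemma tailT_shift (lam : ℝ) (A : ℕ → ℤ) (n : ℕ) : ∀ k,
    tailT lam (fun i => A (i + 1)) n k = tailT lam A n (k + 1) := by
  induction n with
  | zero => intro k; rfl
  | succ n ih => intro k; simp [tailT, ih]

lemma conv_eq (lam : ℝ) (n : ℕ) : ∀ (A : ℕ → ℤ),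
    (∀ m k, (A (k + 1) : ℝ) * lam + tailT lam A m (k + 1) ≠ 0) →
    cfQ lam A n ≠ 0 ∧ cfP lam A n / cfQ lam A n = (A 0 : ℝ) * lam + tailT lam A n 0 := by
  induction n with
  | zero => intro A _; simp [cfP, cfQ, tailT]
  | succ n ih =>
    intro A hA
    obtain ⟨h1, h2⟩ := ih (fun i => A (i + 1)) (fun m k => by
      rw [tailT_shift]; exact hA m (k + 1))
    obtain ⟨e1, e2⟩ := shift_PQ lam A n
    rw [tailT_shift] at h2
    have hd := hA n 0
    simp only [zero_add] at h2 hd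
    have hp : cfP lam (fun i => A (i + 1)) n ≠ 0 := by
      intro h; rw [h, zero_div] at h2; exact hd h2.symm
    rw [e1, e2]
    refine ⟨hp, ?_⟩
    rw [tailT]
    simp only [zero_add]
    rw [← h2]
    field_simp
    ring

/-- infinite tails -/
lemma exists_tails {lam : ℝ} {L : ℕ} {w : ℕ → ℤ} {φ : ℕ → ℝ} (W : BWord lam L w φ)
    {A : ℕ → ℤ} (hnz : ∀ i, A (i + 1) ≠ 0) (hA : WReg L w (fun i => A (i + 1))) {x : ℝ}
    (hx : CFConvergesTo lam A x) :
    ∃ τ : ℕ → ℝ, x = (A 0 : ℝ) * lam + τ 0 ∧ (∀ k, |τ k| ≤ lam / 2) ∧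
      ∀ k, τ k = -1 / ((A (k + 1) : ℝ) * lam + τ (k + 1)) := by
  have hl := W.lam_pos
  have hden : ∀ m k, (A (k + 1) : ℝ) * lam + tailT lam A m (k + 1) ≠ 0 := fun m k =>
    den_ne hl (hnz k) (tail_abs W hA m (k + 1))
  have key : ∀ k, ∀ t, Tendsto (fun n => tailT lam A n k) atTop (𝓝 t) →
      t ≠ 0 ∧ Tendsto (fun n => tailT lam A n (k + 1)) atTop
        (𝓝 (-1 / t - (A (k + 1) : ℝ) * lam)) := by
    intro k t ht
    have ht1 := (tendsto_add_atTop_iff_nat 1).mpr ht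
    set M : ℝ := |(A (k + 1) : ℝ)| * lam + lam / 2 with hM
    have hMpos : 0 < M := by positivity
    have ht0 : t ≠ 0 := by
      have hlow : ∀ n, 1 / M ≤ |tailT lam A (n + 1) k| := by
        intro n
        rw [tailT, abs_div, abs_neg, abs_one]
        apply one_div_le_one_div_of_le (abs_pos.mpr (hden n k))
        calc _ ≤ |(A (k + 1) : ℝ) * lam| + |tailT lam A n (k + 1)| := abs_add_le _ _
          _ ≤ M := by
            rw [abs_mul, abs_of_pos hl]
            have := tail_abs W hA n (k + 1)
            linarith
      have := ge_of_tendsto' ht1.abs hlow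
      have h2 : 0 < 1 / M := by positivity
      exact abs_pos.mp (by linarith)
    refine ⟨ht0, ?_⟩
    have h3 := (tendsto_const_nhds (x := (-1 : ℝ))).div ht1 ht0
    have h4 := h3.sub_const ((A (k + 1) : ℝ) * lam)
    refine h4.congr fun n => ?_
    have e : tailT lam A (n + 1) k = -1 / ((A (k + 1) : ℝ) * lam + tailT lam A n (k + 1)) := rfl
    have := hden n k
    simp [e]
  have hex : ∀ k, ∃ t, Tendsto (fun n => tailT lam A n k) atTop (𝓝 t) := by
    intro k
    induction k with
    | zero =>
      refine ⟨x - (A 0 : ℝ) * lam, ?_⟩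
      refine (hx.2.sub_const ((A 0 : ℝ) * lam)).congr fun n => ?_
      rw [(conv_eq lam n A hden).2]; ring
    | succ k ih =>
      obtain ⟨t, ht⟩ := ih
      exact ⟨_, (key k t ht).2⟩
  choose τ hτ using hex
  refine ⟨τ, ?_, ?_, ?_⟩
  · refine tendsto_nhds_unique hx.2 (((hτ 0).const_add ((A 0 : ℝ) * lam)).congr fun n => ?_)
    rw [(conv_eq lam n A hden).2]
  · intro k
    exact le_of_tendsto' (hτ k).abs fun n => tail_abs W hA n k
  · intro k
    obtain ⟨h0, h1⟩ := key k (τ k) (hτ k)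
    have := tendsto_nhds_unique (hτ (k + 1)) h1
    rw [this]
    field_simp
    ring

lemma strict_tail {lam : ℝ} {L : ℕ} {w : ℕ → ℤ} {φ : ℕ → ℝ} (W : BWord lam L w φ)
    {A : ℕ → ℤ} (hA : WReg L w (fun i => A (i + 1))) {τ : ℕ → ℝ}
    (hτ : ∀ k, |τ k| ≤ lam / 2)
    (hrec : ∀ k, τ k = -1 / ((A (k + 1) : ℝ) * lam + τ (k + 1))) (d : ℕ) :
    ∀ k j : ℕ, j + d = L → ∀ ε : ℤ, (ε = 1 ∨ ε = -1) → (∀ i < j, A (k + i + 1) = ε * w i) →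
      φ j < (ε : ℝ) * τ (k + j) := by
  induction d with
  | zero =>
    intro k j hj ε he hs
    have hab := abs_of_eps (lam := lam) (t := τ (k + j + 1)) (fun ε' he' => by
      have := abs_le.mp (hτ (k + j + 1))
      rcases he' with rfl | rfl <;> push_cast <;> linarith) ε he
    rw [hrec, eps_div he]
    rcases step_aux W hab.1 hab.2 (by omega) (hA k j (by omega) ε he hs) with h | ⟨hjL, h⟩
    · exact h
    · omega
  | succ d ih =>
    intro k j hj ε he hs
    have hab := abs_of_eps (lam := lam) (t := τ (k + j + 1)) (fun ε' he' => by
      have := abs_le.mp (hτ (k + j + 1))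
      rcases he' with rfl | rfl <;> push_cast <;> linarith) ε he
    rw [hrec, eps_div he]
    rcases step_aux W hab.1 hab.2 (by omega) (hA k j (by omega) ε he hs) with h | ⟨hjL, h⟩
    · exact h
    · rw [W.rec_eq j hjL]
      apply neg_one_div_lt (W.den_pos j hjL)
      have := ih k (j + 1) (by omega) ε he (state_succ he hs h)
      have h' : ((ε * A (k + j + 1) : ℤ) : ℝ) = w j := by exact_mod_cast h
      rw [h']
      rw [← add_assoc] at this
      linarith

lemma full_tails {lam : ℝ} {L : ℕ} {w : ℕ → ℤ} {φ : ℕ → ℝ} (W : BWord lam L w φ)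
    {A : ℕ → ℤ} (hnz : ∀ i, A (i + 1) ≠ 0) (hA : WReg L w (fun i => A (i + 1))) {x : ℝ}
    (hx : CFConvergesTo lam A x) :
    ∃ X : ℕ → ℝ, x = X 0 ∧ (∀ k, |X k - (A k : ℝ) * lam| < lam / 2) ∧
      ∀ k, X k = (A k : ℝ) * lam + -1 / X (k + 1) := by
  obtain ⟨τ, h0, h1, h2⟩ := exists_tails W hnz hA hx
  refine ⟨fun k => (A k : ℝ) * lam + τ k, h0, fun k => ?_, fun k => ?_⟩
  · have e1 := strict_tail W hA h1 h2 L k 0 (by omega) 1 (Or.inl rfl) (by simp)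
    have e2 := strict_tail W hA h1 h2 L k 0 (by omega) (-1) (Or.inr rfl) (by simp)
    rw [W.zero] at e1 e2
    push_cast at e1 e2
    simp at e1 e2
    rw [abs_lt]; constructor <;> simp <;> linarith
  · simp only; rw [← h2 k]

lemma tsign_pos {lam X : ℝ} {a : ℤ} (hl : 0 < lam) (h : |X - (a : ℝ) * lam| < lam / 2)
    (ha : 0 < a) : 0 < X := by
  rw [abs_lt] at h
  have : (1 : ℝ) ≤ a := by exact_mod_cast (by omega : 1 ≤ a)
  nlinarith

lemma tsign_neg {lam X : ℝ} {a : ℤ} (hl : 0 < lam) (h : |X - (a : ℝ) * lam| < lam / 2)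
    (ha : a < 0) : X < 0 := by
  rw [abs_lt] at h
  have : (a : ℝ) ≤ -1 := by exact_mod_cast (by omega : a ≤ -1)
  nlinarith

lemma digit_lt {lam X Y : ℝ} {a b : ℤ} (hl : 0 < lam) (h : |X - (a : ℝ) * lam| < lam / 2)
    (h' : |Y - (b : ℝ) * lam| < lam / 2) (hab : a < b) : X < Y := by
  rw [abs_lt] at h h'
  have : (a : ℝ) + 1 ≤ b := by exact_mod_cast hab
  nlinarith

lemma neg_inv_lt {X Y : ℝ} (hXY : X < Y) (hs : (0 < X ∧ 0 < Y) ∨ (X < 0 ∧ Y < 0)) :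
    -1 / X < -1 / Y := by
  rcases hs with ⟨h1, _⟩ | ⟨h1, h2⟩
  · exact neg_one_div_lt h1 hXY
  · have := one_div_lt_one_div_of_neg_of_lt h2 hXY
    rw [neg_div, neg_div]; linarith

lemma descend {lam : ℝ} (hl : 0 < lam) {A B : ℕ → ℤ} {X Y : ℕ → ℝ}
    (hAnz : ∀ i, A (i + 1) ≠ 0)
    (hX : ∀ k, |X k - (A k : ℝ) * lam| < lam / 2) (hXr : ∀ k, X k = (A k : ℝ) * lam + -1 / X (k + 1))
    (hY : ∀ k, |Y k - (B k : ℝ) * lam| < lam / 2) (hYr : ∀ k, Y k = (B k : ℝ) * lam + -1 / Y (k + 1))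
    (d : ℕ) : (∀ m ≤ d, A m = B m) → X d < Y d → X 0 < Y 0 := by
  induction d with
  | zero => intro _ h; exact h
  | succ d ih =>
    intro hAB h
    apply ih (fun m hm => hAB m (by omega))
    rw [hXr d, hYr d, hAB d (by omega)]
    have e := hAB (d + 1) le_rfl
    have : -1 / X (d + 1) < -1 / Y (d + 1) := by
      apply neg_inv_lt h
      rcases lt_or_gt_of_ne (hAnz d) with h' | h'
      · exact Or.inr ⟨tsign_neg hl (hX _) h', tsign_neg hl (hY _) (e ▸ h')⟩
      · exact Or.inl ⟨tsign_pos hl (hX _) h', tsign_pos hl (hY _) (e ▸ h')⟩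
    linarith

lemma order_dir {lam : ℝ} (hl : 0 < lam) {A B : ℕ → ℤ} {X Y : ℕ → ℝ}
    (hAnz : ∀ i, A (i + 1) ≠ 0)
    (hX : ∀ k, |X k - (A k : ℝ) * lam| < lam / 2) (hXr : ∀ k, X k = (A k : ℝ) * lam + -1 / X (k + 1))
    (hY : ∀ k, |Y k - (B k : ℝ) * lam| < lam / 2) (hYr : ∀ k, Y k = (B k : ℝ) * lam + -1 / Y (k + 1))
    (n : ℕ) (hmin : ∀ m < n, A m = B m)
    (h : (n = 0 ∧ A 0 < B 0) ∨
        (1 ≤ n ∧ A n * B n < 0 ∧ 0 < A n) ∨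
        (1 ≤ n ∧ 0 < A n * B n ∧ A n < B n)) : X 0 < Y 0 := by
  rcases n with _ | n
  · have : A 0 < B 0 := by
      rcases h with h | h | h
      · exact h.2
      · omega
      · omega
    exact digit_lt hl (hX 0) (hY 0) this
  · apply descend hl hAnz hX hXr hY hYr n (fun m hm => hmin m (by omega))
    rw [hXr n, hYr n, hmin n (by omega)]
    have : -1 / X (n + 1) < -1 / Y (n + 1) := by
      rcases h with h | ⟨_, h1, h2⟩ | ⟨_, h1, h2⟩
      · omega
      · have hB : B (n + 1) < 0 := by
          by_contra hc
          have := mul_nonneg h2.le (not_lt.mp hc)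
          omega
        have e1 := tsign_pos hl (hX _) h2
        have e2 := tsign_neg hl (hY _) hB
        have e3 := neg_one_div_pos e2
        have e4 : -1 / X (n + 1) < 0 := div_neg_of_neg_of_pos (by norm_num) e1
        linarith
      · apply neg_inv_lt (digit_lt hl (hX _) (hY _) h2)
        rcases pos_and_pos_or_neg_and_neg_of_mul_pos h1 with h | h
        · exact Or.inl ⟨tsign_pos hl (hX _) h.1, tsign_pos hl (hY _) h.2⟩
        · exact Or.inr ⟨tsign_neg hl (hX _) h.1, tsign_neg hl (hY _) h.2⟩
    linarith

lemma main_abs {lam : ℝ} {L : ℕ} {w : ℕ → ℤ} {φ : ℕ → ℝ} (W : BWord lam L w φ)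
    (A B : ℕ → ℤ) (x y : ℝ)
    (hAnz : ∀ i, A (i + 1) ≠ 0) (hAreg : WReg L w (fun i => A (i + 1)))
    (hBnz : ∀ i, B (i + 1) ≠ 0) (hBreg : WReg L w (fun i => B (i + 1)))
    (hx : CFConvergesTo lam A x) (hy : CFConvergesTo lam B y)
    (n : ℕ) (hne : A n ≠ B n) (hmin : ∀ m < n, A m = B m) :
    x < y ↔
      ((n = 0 ∧ A 0 < B 0) ∨
        (1 ≤ n ∧ A n * B n < 0 ∧ 0 < A n) ∨
        (1 ≤ n ∧ 0 < A n * B n ∧ A n < B n)) := by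
  obtain ⟨X, rfl, hX, hXr⟩ := full_tails W hAnz hAreg hx
  obtain ⟨Y, rfl, hY, hYr⟩ := full_tails W hBnz hBreg hy
  have hl := W.lam_pos
  refine ⟨fun hlt => ?_, order_dir hl hAnz hX hXr hY hYr n hmin⟩
  by_contra hc
  have : Y 0 < X 0 := by
    apply order_dir hl hBnz hY hYr hX hXr n (fun m hm => (hmin m hm).symm)
    rcases n with _ | n
    · left
      refine ⟨rfl, ?_⟩
      by_contra h
      exact hc (Or.inl ⟨rfl, by omega⟩)
    · right
      have hA := hAnz n
      have hB := hBnz n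
      rw [mul_comm]
      rcases lt_or_gt_of_ne (mul_ne_zero hA hB) with h | h
      · left
        refine ⟨by omega, h, ?_⟩
        by_contra hB'
        refine hc (Or.inr (Or.inl ⟨by omega, h, ?_⟩))
        by_contra hA'
        have := mul_nonneg_of_nonpos_of_nonpos (not_lt.mp hA') (not_lt.mp hB')
        omega
      · right
        refine ⟨by omega, h, ?_⟩
        by_contra hB'
        exact hc (Or.inr (Or.inr ⟨by omega, h, by omega⟩))
  linarith

lemma cos_rec (α θ : ℝ) (h1 : Real.cos (α + θ) ≠ 0) (h0 : Real.cos α ≠ 0) :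
    2 * Real.cos θ + -(Real.cos (α + 2 * θ) / Real.cos (α + θ))
      = Real.cos α / Real.cos (α + θ) := by
  have e : Real.cos (α + 2 * θ) + Real.cos α = 2 * Real.cos θ * Real.cos (α + θ) := by
    have a1 : α + 2 * θ = (α + θ) + θ := by ring
    have a2 := Real.cos_add (α + θ) θ
    have a3 := Real.cos_sub (α + θ) θ
    rw [show α + θ - θ = α by ring] at a3
    rw [a1, a2, a3]; ring
  field_simp
  linarith

lemma cos_pos_of (α : ℝ) (h0 : 0 ≤ α) (h : α < Real.pi / 2) : 0 < Real.cos α :=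
  Real.cos_pos_of_mem_Ioo ⟨by linarith [Real.pi_pos], h⟩

lemma bword_even (h : ℕ) (hh : 1 ≤ h) :
    BWord (2 * Real.cos (Real.pi / (2 * h + 2))) h (fun _ => 1)
      (fun j => -(Real.cos ((j + 1) * (Real.pi / (2 * h + 2)))
        / Real.cos (j * (Real.pi / (2 * h + 2))))) := by
  set θ : ℝ := Real.pi / (2 * h + 2) with hθ
  have hh' : (1 : ℝ) ≤ h := by exact_mod_cast hh
  have hθp : 0 < θ := by have := Real.pi_pos; positivity
  have hθe : ((h : ℝ) + 1) * θ = Real.pi / 2 := by rw [hθ]; field_simp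
  have hc : ∀ j : ℕ, j ≤ h → 0 < Real.cos (j * θ) := by
    intro j hj
    have hj' : (j : ℝ) ≤ h := by exact_mod_cast hj
    exact cos_pos_of _ (by positivity) (by nlinarith)
  have hc1 : ∀ j : ℕ, j < h → 0 < Real.cos ((j + 1) * θ) := by
    intro j hj
    have := hc (j + 1) hj
    push_cast at this; exact this
  have hden : ∀ j : ℕ, j < h → 2 * Real.cos θ + -(Real.cos ((((j + 1 : ℕ) : ℝ) + 1) * θ)
        / Real.cos (((j + 1 : ℕ) : ℝ) * θ)) = Real.cos (j * θ) / Real.cos ((j + 1) * θ) := by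
    intro j hj
    have := cos_rec (j * θ) θ (by
      rw [show (j : ℝ) * θ + θ = (j + 1) * θ by ring]; exact (hc1 j hj).ne') (hc j hj.le).ne'
    rw [show (j : ℝ) * θ + θ = (j + 1) * θ by ring,
      show (j : ℝ) * θ + 2 * θ = (j + 1 + 1) * θ by ring] at this
    push_cast
    exact this
  constructor
  · have := cos_pos_of θ hθp.le (by nlinarith); linarith
  · simp
  · intro j hj
    rw [neg_nonpos]
    refine div_nonneg ?_ (hc j hj).le
    rcases hj.eq_or_lt with rfl | hj
    · rw [hθe, Real.cos_pi_div_two]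
    · exact (hc1 j hj).le
  · intro j; exact le_rfl
  · intro j hj
    rw [Int.cast_one, one_mul, hden j hj]
    exact div_pos (hc j hj.le) (hc1 j hj)
  · intro j hj
    rw [Int.cast_one, one_mul, hden j hj]
    have := (hc j hj.le).ne'
    have := (hc1 j hj).ne'
    field_simp

lemma bword_odd (h : ℕ) :
    BWord (2 * Real.cos (Real.pi / (2 * h + 3))) (2 * h + 1) (fun i => if i = h then 2 else 1)
      (fun j => if j ≤ h then -(Real.cos ((j + 1) * (Real.pi / (2 * h + 3)))
        / Real.cos (j * (Real.pi / (2 * h + 3))))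
        else -(Real.cos ((j - h + 1 / 2) * (Real.pi / (2 * h + 3)))
        / Real.cos ((j - h - 1 / 2) * (Real.pi / (2 * h + 3))))) := by
  set θ : ℝ := Real.pi / (2 * h + 3) with hθ
  have hθp : 0 < θ := by have := Real.pi_pos; positivity
  have hθe : ((h : ℝ) + 3 / 2) * θ = Real.pi / 2 := by rw [hθ]; field_simp
  have hc : ∀ s : ℝ, 0 ≤ s → s < h + 3 / 2 → 0 < Real.cos (s * θ) := by
    intro s hs hs'
    exact cos_pos_of _ (by positivity) (by nlinarith)
  have hrec : ∀ s : ℝ, 0 ≤ s → s + 1 < h + 3 / 2 →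
      2 * Real.cos θ + -(Real.cos ((s + 2) * θ) / Real.cos ((s + 1) * θ))
        = Real.cos (s * θ) / Real.cos ((s + 1) * θ) := by
    intro s hs hs'
    have := cos_rec (s * θ) θ (by
      rw [show s * θ + θ = (s + 1) * θ by ring]; exact (hc _ (by linarith) hs').ne')
      (hc s hs (by linarith)).ne'
    rw [show s * θ + θ = (s + 1) * θ by ring,
      show s * θ + 2 * θ = (s + 2) * θ by ring] at this
    exact this
  have hh0 : (0 : ℝ) ≤ h := Nat.cast_nonneg h
  -- the denominators
  set φ : ℕ → ℝ := (fun j => if j ≤ h then -(Real.cos ((j + 1) * θ) / Real.cos (j * θ))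
        else -(Real.cos ((j - h + 1 / 2) * θ) / Real.cos ((j - h - 1 / 2) * θ))) with hφ
  have hden : ∀ j : ℕ, j < 2 * h + 1 → ∃ c d : ℝ, 0 < c ∧ 0 < d ∧ φ j = -(d / c) ∧
      (((if j = h then 2 else 1 : ℤ) : ℤ) : ℝ) * (2 * Real.cos θ) + φ (j + 1) = c / d := by
    intro j hj
    have hj0 : (0 : ℝ) ≤ j := Nat.cast_nonneg j
    rcases lt_trichotomy j h with hjh | rfl | hjh
    · have hj' : (j : ℝ) + 1 ≤ h := by exact_mod_cast hjh
      refine ⟨_, _, hc j hj0 (by linarith), hc (j + 1) (by linarith) (by linarith), ?_, ?_⟩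
      · simp [hφ, hjh.le]
      · have e := hrec j hj0 (by linarith)
        have : j + 1 ≤ h := hjh
        simp only [hφ, this, if_true, hjh.ne, if_false]
        push_cast
        rw [← e, show (j : ℝ) + 1 + 1 = j + 2 by ring]; ring
    · refine ⟨_, _, hc j hj0 (by linarith), hc (j + 1) (by linarith) (by linarith), ?_, ?_⟩
      · simp [hφ]
      · simp only [hφ, if_true]
        rw [if_neg (by omega)]
        push_cast
        rw [show (j : ℝ) + 1 - j + 1 / 2 = 3 / 2 by ring, show (j : ℝ) + 1 - j - 1 / 2 = 1 / 2 by ring]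
        have e1 : Real.cos (j * θ) = Real.sin (3 / 2 * θ) := by
          rw [← Real.cos_pi_div_two_sub, ← hθe]; ring_nf
        have e2 : Real.cos ((j + 1) * θ) = Real.sin (1 / 2 * θ) := by
          rw [← Real.cos_pi_div_two_sub, ← hθe]; ring_nf
        have p1 : 0 < Real.cos (1 / 2 * θ) := hc _ (by norm_num) (by linarith)
        have p2 : 0 < Real.sin (1 / 2 * θ) := by
          rw [← e2]; exact hc _ (by linarith) (by linarith)
        rw [e1, e2]
        set u := 1 / 2 * θ with hu
        have t1 : θ = 2 * u := by rw [hu]; ring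
        have t2 : 3 / 2 * θ = 3 * u := by rw [hu]; ring
        rw [t2, t1, Real.cos_three_mul, Real.sin_three_mul, Real.cos_two_mul]
        have sc := Real.sin_sq_add_cos_sq u
        have : Real.sin u ^ 2 = 1 - Real.cos u ^ 2 := by linarith
        field_simp
        rw [this]; ring
    · have hj' : (h : ℝ) + 1 ≤ j := by exact_mod_cast hjh
      have hj2 : (j : ℝ) ≤ 2 * h := by exact_mod_cast (by omega : j ≤ 2 * h)
      refine ⟨_, _, hc (j - h - 1 / 2) (by linarith) (by linarith),
        hc (j - h + 1 / 2) (by linarith) (by linarith), ?_, ?_⟩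
      · simp only [hφ]; rw [if_neg (by omega)]
      · have e := hrec (j - h - 1 / 2) (by linarith) (by linarith)
        simp only [hφ]
        rw [if_neg (by omega), if_neg (by omega)]
        push_cast
        rw [show (j : ℝ) - h - 1 / 2 + 2 = j + 1 - h + 1 / 2 by ring,
          show (j : ℝ) - h - 1 / 2 + 1 = j - h + 1 / 2 by ring] at e
        rw [← e, show (j : ℝ) + 1 - h - 1 / 2 = j - h + 1 / 2 by ring]; ring
  constructor
  · have := hc 1 (by norm_num) (by linarith)
    rw [one_mul] at this; linarith
  · simp [hφ]
  · intro j hj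
    rcases hj.eq_or_lt with rfl | hj
    · simp only [hφ]
      rw [if_neg (by omega)]
      push_cast
      rw [show (2 * (h : ℝ) + 1 - h + 1 / 2) * θ = Real.pi / 2 by rw [← hθe]; ring,
        Real.cos_pi_div_two]
      simp
    · obtain ⟨c, d, hc, hd, e, -⟩ := hden j hj
      rw [e, neg_nonpos]; positivity
  · intro j; split_ifs <;> norm_num
  · intro j hj
    obtain ⟨c, d, hc, hd, -, e⟩ := hden j hj
    rw [e]; positivity
  · intro j hj
    obtain ⟨c, d, hc, hd, e1, e⟩ := hden j hj
    rw [e, e1]; field_simp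

lemma wreg_even {q h : ℕ} (hq : Even q) (hh : hQ q = h) {a : ℕ → ℤ} (hnz : ∀ i, a i ≠ 0)
    (ha : RegularSeq q a) : WReg h (fun _ => 1) a := by
  intro k j hj ε he hs
  have hne : ε * a (k + j) ≠ 0 := mul_ne_zero (by rcases he with rfl | rfl <;> norm_num) (hnz _)
  rcases lt_or_gt_of_ne hne with h1 | h1
  · exact Or.inl h1
  · right
    rcases hj.eq_or_lt with rfl | hj
    · exfalso
      apply ha k (j + 1)
      refine ⟨ε, he, Or.inr ?_⟩
      rw [if_pos hq, hh]
      refine ⟨ε * a (k + j), h1, ?_⟩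
      apply List.ext_getElem
      · simp
      · intro i h2 h3
        simp only [List.length_ofFn] at h2
        rw [List.getElem_ofFn]
        rcases Nat.lt_succ_iff_lt_or_eq.mp h2 with h4 | rfl
        · simp [List.getElem_append, h4, hs i h4]
        · rcases he with rfl | rfl <;> simp
    · exact ⟨hj, h1⟩

lemma wreg_odd {q h : ℕ} (hq : ¬ Even q) (hh : hQ q = h) {a : ℕ → ℤ} (hnz : ∀ i, a i ≠ 0)
    (ha : RegularSeq q a) : WReg (2 * h + 1) (fun i => if i = h then 2 else 1) a := by
  intro k j hj ε he hs
  have hne : ε * a (k + j) ≠ 0 := mul_ne_zero (by rcases he with rfl | rfl <;> norm_num) (hnz _)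
  have hee : ∀ z : ℤ, ε * (ε * z) = z := by intro z; rcases he with rfl | rfl <;> simp
  rcases lt_or_gt_of_ne hne with h1 | h1
  · exact Or.inl h1
  · right
    rcases hj.eq_or_lt with rfl | hj
    · exfalso
      apply ha k (2 * h + 1 + 1)
      refine ⟨ε, he, Or.inr ?_⟩
      rw [if_neg hq, hh]
      refine ⟨ε * a (k + (2 * h + 1)), h1, ?_⟩
      apply List.ext_getElem
      · simp; omega
      · intro i h2 h3
        simp only [List.length_ofFn] at h2
        rw [List.getElem_ofFn]
        simp only
        rcases lt_trichotomy i h with h4 | rfl | h4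
        · rw [List.getElem_append_left (by simpa using h4), hs i (by omega)]
          simp [h4.ne]
        · rw [List.getElem_append_right (by simp), hs i (by omega)]
          simp
        · rw [List.getElem_append_right (by simp; omega)]
          obtain ⟨m, rfl⟩ := Nat.exists_eq_add_of_lt h4
          simp only [List.length_replicate, show h + m + 1 - h = m + 1 by omega,
            List.getElem_cons_succ]
          rcases Nat.lt_or_ge m h with h5 | h5
          · rw [List.getElem_append_left (by simpa using h5), hs _ (by omega)]
            simp [show h + m + 1 ≠ h by omega]
          · have : m = h := by omega
            subst this
            rw [List.getElem_append_right (by simp)]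
            simp only [List.length_replicate, Nat.sub_self, List.getElem_cons_zero, hee]
            congr 1; omega
    · refine ⟨hj, ?_⟩
      simp only
      split_ifs with h4
      · subst h4
        by_contra hc
        have h5 : ε * a (k + j) = 1 := by omega
        have h6 : a (k + j) = ε := by rw [← hee (a (k + j)), h5, mul_one]
        apply ha k (j + 1)
        refine ⟨ε, he, Or.inl ?_⟩
        rw [hh]
        apply List.ext_getElem
        · simp
        · intro i h2 h3
          simp only [List.length_ofFn] at h2
          rw [List.getElem_ofFn]
          rcases Nat.lt_succ_iff_lt_or_eq.mp h2 with h4 | rfl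
          · simp [hs i h4, h4.ne]
          · simp [h6]
      · exact h1

theorem stmt5 (q : ℕ) (hq : 3 ≤ q) (A B : ℕ → ℤ) (x y : ℝ)
    (hAnz : ∀ i, A (i + 1) ≠ 0) (hAreg : RegularSeq q (fun i => A (i + 1)))
    (hBnz : ∀ i, B (i + 1) ≠ 0) (hBreg : RegularSeq q (fun i => B (i + 1)))
    (hx : CFConvergesTo (lamq q) A x) (hy : CFConvergesTo (lamq q) B y)
    (n : ℕ) (hne : A n ≠ B n) (hmin : ∀ m < n, A m = B m) :
    x < y ↔
      ((n = 0 ∧ A 0 < B 0) ∨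
        (1 ≤ n ∧ A n * B n < 0 ∧ 0 < A n) ∨
        (1 ≤ n ∧ 0 < A n * B n ∧ A n < B n)) := by
  by_cases hqe : Even q
  · obtain ⟨h, hh⟩ : ∃ h, q = 2 * h + 2 := by
      obtain ⟨m, rfl⟩ := hqe
      exact ⟨m - 1, by omega⟩
    have hQh : hQ q = h := by rw [hQ, if_pos hqe]; omega
    have W := bword_even h (by omega)
    have hl : lamq q = 2 * Real.cos (Real.pi / (2 * h + 2)) := by
      rw [lamq, hh]; push_cast; rfl
    rw [hl] at hx hy
    exact main_abs W A B x y hAnz (wreg_even hqe hQh hAnz hAreg) hBnz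
      (wreg_even hqe hQh hBnz hBreg) hx hy n hne hmin
  · obtain ⟨h, hh⟩ : ∃ h, q = 2 * h + 3 := by
      obtain ⟨m, rfl⟩ := Nat.not_even_iff_odd.mp hqe
      exact ⟨m - 1, by omega⟩
    have hQh : hQ q = h := by rw [hQ, if_neg hqe]; omega
    have W := bword_odd h
    have hl : lamq q = 2 * Real.cos (Real.pi / (2 * h + 3)) := by
      rw [lamq, hh]; push_cast; rfl
    rw [hl] at hx hy
    exact main_abs W A B x y hAnz (wreg_odd hqe hQh hAnz hAreg) hBnz
      (wreg_odd hqe hQh hBnz hBreg) hx hy n hne hmin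
end
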